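/- For the elliptic curve E₁: y² = x³ + 1 over ℚ, the value of its L-function at s = 1 is L(E₁/ℚ, 1) = (∛4/(4√3))·ω, where ω = 3.059908⋯ is the real period constant of the lattice L_ω. -/

import Mathlib

noncomputable section

open Complex Real ComplexConjugate

/-- `τ = (−1+√−3)/2`, a primitive cube root of unity. -/
def tau : ℂ := (-1 + Real.sqrt 3 * Complex.I) / 2

/-- `√−3 = 1 + 2τ`, the square root of `−3` with positive imaginary part. -/
def sqrtm3 : ℂ := Real.sqrt 3 * Complex.I

/-- The ring of integers `O_K = ℤ[τ]` of `K = ℚ(√−3)`, as a subring of `ℂ`. -/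
def Eis : Subring ℂ := Subring.closure {tau}

/-- `τ` as an element of `ℤ[τ]`. -/
def tauO : Eis := ⟨tau, Subring.subset_closure rfl⟩

/-- `√−3` as an element of `ℤ[τ]`. -/
def sqrtm3O : Eis := 1 + 2 * tauO

/-- Membership in the lattice `L_ω = ω·ℤ[τ]`. -/
def inLattice (ω : ℝ) (z : ℂ) : Prop := ∃ a : Eis, z = (ω : ℂ) * a

/-- The Weierstrass `℘`-function of the lattice `L_ω = ω·ℤ[τ]`. -/
def wp (ω : ℝ) (z : ℂ) : ℂ :=
  1 / z ^ 2 + ∑' a : {w : ℂ // inLattice ω w ∧ w ≠ 0},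
    (1 / (z - (a : ℂ)) ^ 2 - 1 / (a : ℂ) ^ 2)

/-- The Weierstrass `ζ`-function of the lattice `L_ω = ω·ℤ[τ]`. -/
def wzeta (ω : ℝ) (z : ℂ) : ℂ :=
  1 / z + ∑' a : {w : ℂ // inLattice ω w ∧ w ≠ 0},
    (1 / (z - (a : ℂ)) + 1 / (a : ℂ) + z / (a : ℂ) ^ 2)

/-- The real cube root of 2, as a complex number. -/
def cbrt2 : ℂ := ((2 : ℝ) ^ ((1 : ℝ) / 3) : ℝ)

/-- The real cube root of 4, as a complex number. -/
def cbrt4 : ℂ := ((4 : ℝ) ^ ((1 : ℝ) / 3) : ℝ)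


/-
The curve has complex multiplication by `ℤ[τ]`, and its `L`-series is `∑ w̄ / N(w) ^ s` over the ray
`w ≡ 1` modulo `2 √-3 ℤ[τ]`. To see this, compare the Hecke relations of the coefficients on both
sides: for `p ≡ 2` modulo `3` cubing is bijective on `𝔽_p`, so that `a_p = 0`, and for `p ≡ 1`
modulo `3` the number of points is computed by the Jacobi sum `J` of a cubic and the quadratic
character. Since `(χ(u) - 1) (φ(1 - u) - 1)` is always divisible by `2 √-3`, `J + p` lies in the
conductor, so that `-J ≡ p ≡ 1` is an element of the ray of norm `p`, and `a_p = -2 Re J`.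

At `s = 1` the term at `w` is `1 / w`, so the value is formally `ζ(v)`, up to a factor, at the
6-torsion point `v = ω / (2 √-3)` of the Weierstrass `ζ`-function. To make sense of it, combine the
terms at `l ± 1` and `l ± 7`, for `l` in the conductor, so that their linear parts cancel. The
resulting series converges absolutely for `1 / 2 < Re s` and continues `12 L`, as the ray and
its negative each contribute `7 - 1` copies of `L`. At `s = 1` it is a multiple of
`7 ζ(v) - ζ(7 v)`. The quasi-periods cancel in this combination, and as `v` is, modulo the lattice,
a 3-torsion point plus a half-period, the addition formula for `ζ` reduces it to the values of `℘`
and `℘'` at these two points.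
-/

section WeierstrassZeta

open Filter Topology
open scoped PeriodPair

/-- The summand of the Weierstrass `ζ`-function at the lattice point `l`. -/
def weierstrassZetaSummand (l z : ℂ) : ℂ := 1 / (z - l) + 1 / l + z / l ^ 2

lemma norm_weierstrassZetaSummand_le {r : ℝ} (hr : 0 < r) {l z : ℂ} (hz : ‖z‖ < r)
    (hl : 2 * r ≤ ‖l‖) :
    ‖weierstrassZetaSummand l z‖ ≤ 2 * r ^ 2 * ‖l‖ ^ (-3 : ℝ) := by
  have hl_pos : 0 < ‖l‖ := by linarith
  have hl0 : l ≠ 0 := norm_pos_iff.mp hl_pos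
  have hzl : z - l ≠ 0 := sub_ne_zero.mpr (by rintro rfl; linarith)
  have hdist : ‖l‖ / 2 ≤ ‖z - l‖ := by
    rw [norm_sub_rev]
    exact .trans (by linarith) (norm_sub_norm_le l z)
  have hclosed : weierstrassZetaSummand l z = z ^ 2 / (l ^ 2 * (z - l)) := by
    rw [weierstrassZetaSummand]
    field_simp
    ring
  rw [hclosed, norm_div, norm_mul, norm_pow, norm_pow]
  calc ‖z‖ ^ 2 / (‖l‖ ^ 2 * ‖z - l‖) ≤ r ^ 2 / (‖l‖ ^ 2 * (‖l‖ / 2)) := by gcongr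
    _ = 2 * r ^ 2 / ‖l‖ ^ 3 := by field_simp
    _ = 2 * r ^ 2 * ‖l‖ ^ (-3 : ℝ) := by norm_cast

lemma hasDerivAt_weierstrassZetaSummand {l z : ℂ} (h : z - l ≠ 0) :
    HasDerivAt (weierstrassZetaSummand l) (-(1 / (z - l) ^ 2 - 1 / l ^ 2)) z := by
  have hinv : HasDerivAt (fun w : ℂ ↦ 1 / (w - l)) (-(1 / (z - l) ^ 2)) z := by
    simpa [neg_div] using (hasDerivAt_inv h).comp_sub_const z l
  have hlin : HasDerivAt (fun w : ℂ ↦ w / l ^ 2) (1 / l ^ 2) z := (hasDerivAt_id z).div_const _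
  exact ((hinv.add_const (1 / l)).add hlin).congr_deriv (by ring)

variable (L : PeriodPair)

/-- The Weierstrass `ζ`-function of `L`. Since `1 / 0 = 0`, the summand at `l = 0` is `1 / z`. -/
def weierstrassZeta (z : ℂ) : ℂ := ∑' l : L.lattice, weierstrassZetaSummand l z

/-- The part `ζ(z) - 1 / z` of the Weierstrass `ζ`-function, regular at the origin; it serves to
expand `ζ` there. -/
def weierstrassZetaReg (z : ℂ) : ℂ :=
  ∑' l : L.lattice, if (l : ℂ) = 0 then 0 else weierstrassZetaSummand l z

lemma hasSum_weierstrassZetaReg (z : ℂ) :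
    HasSum (fun l : L.lattice ↦ if (l : ℂ) = 0 then 0 else weierstrassZetaSummand l z)
      (weierstrassZetaReg L z) := by
  refine (L.hasSumLocallyUniformly_aux
    (fun l w ↦ if (l : ℂ) = 0 then 0 else weierstrassZetaSummand l w)
    (u := fun r l ↦ 2 * r ^ 2 * ‖l‖ ^ (-3 : ℝ)) (fun _ _ ↦
      (ZLattice.summable_norm_rpow _ _ (by simp; norm_num)).mul_left _) fun r hr ↦
    eventually_atTop.mpr ⟨2 * r, ?_⟩).hasSum
  rintro _ hl s hs l rfl
  split_ifs
  · rw [norm_zero]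
    positivity
  · exact norm_weierstrassZetaSummand_le hr hs hl

lemma hasSum_weierstrassZeta_reg_add (z : ℂ) :
    HasSum (fun l : L.lattice ↦ weierstrassZetaSummand l z) (weierstrassZetaReg L z + 1 / z) := by
  refine ((hasSum_weierstrassZetaReg L z).add
    (hasSum_ite_eq (0 : L.lattice) (1 / z))).congr_fun fun l ↦ ?_
  by_cases hl : l = 0 <;> simp [hl, weierstrassZetaSummand]

lemma weierstrassZeta_eq_reg_add (z : ℂ) :
    weierstrassZeta L z = weierstrassZetaReg L z + 1 / z :=
  (hasSum_weierstrassZeta_reg_add L z).tsum_eq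

lemma hasSum_weierstrassZeta (z : ℂ) :
    HasSum (fun l : L.lattice ↦ weierstrassZetaSummand l z) (weierstrassZeta L z) :=
  weierstrassZeta_eq_reg_add L z ▸ hasSum_weierstrassZeta_reg_add L z

@[simp]
lemma weierstrassZetaReg_zero : weierstrassZetaReg L 0 = 0 := by
  simp [weierstrassZetaReg, weierstrassZetaSummand]

lemma weierstrassZeta_neg (z : ℂ) : weierstrassZeta L (-z) = -weierstrassZeta L z := by
  simp only [weierstrassZeta]
  rw [← (Equiv.neg L.lattice).tsum_eq, ← tsum_neg]
  congr with l
  simp only [weierstrassZetaSummand, Equiv.neg_apply, NegMemClass.coe_neg]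
  rw [show -z - -(l : ℂ) = -(z - l) by ring]
  simp only [one_div, inv_neg, neg_div]
  ring

variable {L}

lemma hasDerivAt_weierstrassZetaReg {z : ℂ} (hz : z ∈ ((L.lattice : Set ℂ) \ {0})ᶜ) :
    HasDerivAt (weierstrassZetaReg L) (-L.weierstrassPExcept 0 z) z := by
  refine hasDerivAt_of_tendstoLocallyUniformlyOn L.isOpen_compl_lattice_sdiff
    (L.hasSumLocallyUniformly_weierstrassPExcept 0).tendstoLocallyUniformlyOn.neg
    (.of_forall fun s w hw ↦ ?_) (fun w _ ↦ hasSum_weierstrassZetaReg L w) hz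
  simp only [Pi.neg_apply, ← Finset.sum_neg_distrib]
  refine HasDerivAt.fun_sum fun l _ ↦ ?_
  split_ifs with hl
  · simpa using hasDerivAt_const w (0 : ℂ)
  · refine hasDerivAt_weierstrassZetaSummand (sub_ne_zero.mpr ?_)
    rintro rfl
    exact hw ⟨l.2, hl⟩

lemma hasDerivAt_weierstrassZeta {z : ℂ} (hz : z ∉ L.lattice) :
    HasDerivAt (weierstrassZeta L) (-℘[L] z) z := by
  have hz0 : z ≠ 0 := by rintro rfl; exact hz (zero_mem _)
  have hinv : HasDerivAt (fun w : ℂ ↦ 1 / w) (-(1 / z ^ 2)) z := by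
    simpa [neg_div] using hasDerivAt_inv hz0
  have hP := L.weierstrassPExcept_add 0 z
  simp only [ZeroMemClass.coe_zero, sub_zero] at hP
  rw [funext (weierstrassZeta_eq_reg_add L)]
  refine ((hasDerivAt_weierstrassZetaReg (by simp [hz])).add hinv).congr_deriv ?_
  rw [← hP]
  simp
  ring

lemma analyticAt_weierstrassZetaReg_zero : AnalyticAt ℂ (weierstrassZetaReg L) 0 :=
  DifferentiableOn.analyticAt (s := ((L.lattice : Set ℂ) \ {0})ᶜ)
    (fun _ hw ↦ (hasDerivAt_weierstrassZetaReg hw).differentiableAt.differentiableWithinAt)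
    (L.isOpen_compl_lattice_sdiff.mem_nhds (by simp))

lemma analyticAt_weierstrassZeta {z : ℂ} (hz : z ∉ L.lattice) :
    AnalyticAt ℂ (weierstrassZeta L) z :=
  DifferentiableOn.analyticAt (s := (L.lattice : Set ℂ)ᶜ)
    (fun _ hw ↦ (hasDerivAt_weierstrassZeta hw).differentiableAt.differentiableWithinAt)
    (L.isClosed_lattice.isOpen_compl.mem_nhds hz)

variable (L)

lemma isPreconnected_compl_lattice : IsPreconnected (L.lattice : Set ℂ)ᶜ :=
  (Set.Countable.isConnected_compl_of_one_lt_rank (by simp)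
    (countable_of_Lindelof_of_discrete (X := L.lattice))).isPreconnected

lemma eventually_notMem_lattice (z : ℂ) : ∀ᶠ w in 𝓝[≠] z, w ∉ L.lattice := by
  filter_upwards [nhdsWithin_le_nhds (L.compl_lattice_sdiff_singleton_mem_nhds z),
    self_mem_nhdsWithin] with w hw hwz hwL using hw ⟨hwL, hwz⟩

variable {L}

lemma add_mem_lattice_iff {z l : ℂ} (hl : l ∈ L.lattice) :
    z + l ∈ L.lattice ↔ z ∈ L.lattice :=
  L.lattice.add_mem_iff_left hl

lemma neg_add_mem_lattice_iff {z h : ℂ} (h2 : h + h ∈ L.lattice) :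
    -z + h ∈ L.lattice ↔ z + h ∈ L.lattice := by
  rw [← neg_mem_iff, ← add_mem_lattice_iff h2, show -(-z + h) + (h + h) = z + h by ring]

lemma weierstrassP_add {l : ℂ} (hl : l ∈ L.lattice) (z : ℂ) : ℘[L] (z + l) = ℘[L] z :=
  L.weierstrassP_add_coe z ⟨l, hl⟩

lemma derivWeierstrassP_add {l : ℂ} (hl : l ∈ L.lattice) (z : ℂ) : ℘'[L] (z + l) = ℘'[L] z :=
  L.derivWeierstrassP_add_coe z ⟨l, hl⟩

variable (L) in
/-- `η` is the quasi-period of the Weierstrass `ζ`-function along `l`. -/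
def IsQuasiPeriod (l η : ℂ) : Prop :=
  ∀ z ∉ L.lattice, weierstrassZeta L (z + l) = weierstrassZeta L z + η

lemma exists_isQuasiPeriod {l : ℂ} (hl : l ∈ L.lattice) : ∃ η : ℂ, IsQuasiPeriod L l η := by
  set w : ℂ := L.ω₁ / 2
  set η : ℂ := weierstrassZeta L (w + l) - weierstrassZeta L w
  have hshift : ∀ z ∉ L.lattice, HasDerivAt (fun z ↦ weierstrassZeta L (z + l)) (-℘[L] z) z := by
    intro z hz
    rw [← weierstrassP_add hl]
    exact (hasDerivAt_weierstrassZeta ((add_mem_lattice_iff hl).not.mpr hz)).comp_add_const z l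
  have hconst : ∀ z ∉ L.lattice, HasDerivAt (fun z ↦ weierstrassZeta L z + η) (-℘[L] z) z :=
    fun z hz ↦ (hasDerivAt_weierstrassZeta hz).add_const η
  exact ⟨η, L.isClosed_lattice.isOpen_compl.eqOn_of_deriv_eq (isPreconnected_compl_lattice L)
    (fun z hz ↦ (hshift z hz).differentiableAt.differentiableWithinAt)
    (fun z hz ↦ (hconst z hz).differentiableAt.differentiableWithinAt)
    (fun z hz ↦ (hshift z hz).deriv.trans (hconst z hz).deriv.symm)
    L.ω₁_div_two_notMem_lattice (by simp only [η, w]; ring)⟩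

end WeierstrassZeta

section HalfPeriod

open Filter Topology
open scoped PeriodPair

lemma tendsto_add_const_punctured (z l : ℂ) :
    Tendsto (fun w ↦ w + l) (𝓝[≠] z) (𝓝[≠] (z + l)) :=
  ((continuous_add_const l).tendsto z).inf
    (tendsto_principal_principal.mpr fun _ hw ↦ (add_left_injective l).ne hw)

variable {L : PeriodPair}

lemma exists_eventuallyEq_const_of_periodic {F : ℂ → ℂ} (hF : Meromorphic F)
    (hord : ∀ z, 0 ≤ meromorphicOrderAt F z)
    (hper : ∀ l ∈ L.lattice, ∀ z, ∀ᶠ w in 𝓝[≠] z, F (w + l) = F w) :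
    ∃ c : ℂ, ∀ z, ∀ᶠ w in 𝓝[≠] z, F w = c := by
  set G : ℂ → ℂ := toMeromorphicNFOn F Set.univ
  have hFG (z : ℂ) : F =ᶠ[𝓝[≠] z] G :=
    (hF.meromorphicOn.toMeromorphicNFOn_eq_self_on_nhdsNE (Set.mem_univ z)).symm
  have hG : Differentiable ℂ G := fun z ↦ by
    refine AnalyticAt.differentiableAt ?_
    rw [← (meromorphicNFOn_toMeromorphicNFOn F Set.univ
      (Set.mem_univ z)).meromorphicOrderAt_nonneg_iff_analyticAt,
      meromorphicOrderAt_toMeromorphicNFOn hF.meromorphicOn (Set.mem_univ z)]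
    exact hord z
  have hGper (z l : ℂ) (hl : l ∈ L.lattice) : G (z + l) = G z := by
    have hlim (u : ℂ → ℂ) (hu : Continuous u) : Tendsto u (𝓝[≠] z) (𝓝 (u z)) :=
      (hu.tendsto z).mono_left nhdsWithin_le_nhds
    refine tendsto_nhds_unique_of_eventuallyEq
      (hlim (fun w ↦ G (w + l)) (hG.continuous.comp (continuous_add_const l)))
      (hlim G hG.continuous) ?_
    filter_upwards [(tendsto_add_const_punctured z l).eventually (hFG (z + l)), hFG z,
      hper l hl z] with w h₁ h₂ h₃
    rw [← h₁, ← h₂, h₃]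
  have hbdd : Bornology.IsBounded (Set.range G) :=
    (IsZLattice.isCompact_range_of_periodic L.lattice G hG.continuous hGper).isBounded
  refine ⟨G 0, fun z ↦ (hFG z).mono fun w hw ↦ ?_⟩
  rw [hw, hG.apply_eq_apply_of_bounded hbdd w 0]

lemma exists_analyticAt_eq_sub_mul {f : ℂ → ℂ} {a : ℂ} (hf : AnalyticAt ℂ f a) (ha : f a = 0) :
    ∃ g, AnalyticAt ℂ g a ∧ g a = deriv f a ∧ ∀ z, f z = (z - a) * g z := by
  obtain ⟨p, hp⟩ := hf
  refine ⟨dslope f a, hp.has_fpower_series_dslope_fslope.analyticAt, dslope_same f a, fun z ↦ ?_⟩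
  rw [← smul_eq_mul, sub_smul_dslope, ha, sub_zero]

lemma meromorphic_weierstrassZeta : Meromorphic (weierstrassZeta L) := by
  have hzero : MeromorphicAt (weierstrassZeta L) 0 := by
    have hreg := (analyticAt_weierstrassZetaReg_zero (L := L)).meromorphicAt
    rw [funext (weierstrassZeta_eq_reg_add L)]
    fun_prop
  intro l
  by_cases hl : l ∈ L.lattice
  · obtain ⟨η, hη⟩ := exists_isQuasiPeriod hl
    rw [← zero_add l, ← meromorphicAt_comp_add_const_iff_meromorphicAt]
    refine (hzero.add (MeromorphicAt.const η 0)).congr ?_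
    filter_upwards [eventually_notMem_lattice L 0] with w hw using (hη w hw).symm
  · exact (analyticAt_weierstrassZeta hl).meromorphicAt

variable {h : ℂ}

lemma derivWeierstrassP_halfPeriod (h2 : h + h ∈ L.lattice) : ℘'[L] h = 0 := by
  have hodd := derivWeierstrassP_add h2 (-h)
  rw [L.derivWeierstrassP_neg, neg_add_cancel_left] at hodd
  exact CharZero.eq_neg_self_iff.mp hodd

variable (L h) in
/-- The difference of the two sides (up to the factor `℘(z) - ℘(h)`) of the addition formula
`ζ(z + h) - ζ(z) - ζ(h) = ℘'(z) / (2 (℘(z) - ℘(h)))` at a half-period `h`. -/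
def halfPeriodDefect (z : ℂ) : ℂ :=
  (weierstrassZeta L (z + h) - weierstrassZeta L z - weierstrassZeta L h) *
    (℘[L] z - ℘[L] h) - ℘'[L] z / 2

lemma halfPeriodDefect_add {z l : ℂ} (hl : l ∈ L.lattice) (hz : z ∉ L.lattice)
    (hzh : z + h ∉ L.lattice) : halfPeriodDefect L h (z + l) = halfPeriodDefect L h z := by
  obtain ⟨η, hη⟩ := exists_isQuasiPeriod hl
  simp only [halfPeriodDefect]
  rw [weierstrassP_add hl, derivWeierstrassP_add hl, add_right_comm, hη _ hz, hη _ hzh]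
  ring

lemma halfPeriodDefect_neg (h2 : h + h ∈ L.lattice) (hh : h ∉ L.lattice) {z : ℂ}
    (hzh : z + h ∉ L.lattice) : halfPeriodDefect L h (-z) = -halfPeriodDefect L h z := by
  obtain ⟨η, hη⟩ := exists_isQuasiPeriod h2
  have hηh : weierstrassZeta L h = -weierstrassZeta L h + η := by
    rw [← weierstrassZeta_neg, ← hη (-h) (neg_mem_iff.not.mpr hh), neg_add_cancel_left]
  have hηz : weierstrassZeta L (-z + h) = -weierstrassZeta L (z + h) + η := by
    rw [← weierstrassZeta_neg, ← hη (-(z + h)) (neg_mem_iff.not.mpr hzh)]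
    congr 1
    ring
  simp only [halfPeriodDefect]
  rw [hηz, weierstrassZeta_neg, L.weierstrassP_neg, L.derivWeierstrassP_neg]
  linear_combination (℘[L] z - ℘[L] h) * -hηh

lemma analyticAt_halfPeriodDefect {z : ℂ} (hz : z ∉ L.lattice) (hzh : z + h ∉ L.lattice) :
    AnalyticAt ℂ (halfPeriodDefect L h) z := by
  have hshift : AnalyticAt ℂ (fun w ↦ weierstrassZeta L (w + h)) z :=
    (analyticAt_weierstrassZeta hzh).fun_comp (f := fun w ↦ w + h) (by fun_prop)
  have hζ := analyticAt_weierstrassZeta hz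
  have hP' := L.analyticOnNhd_derivWeierstrassP _ hz
  have hP := L.analyticOnNhd_weierstrassP _ hz
  unfold halfPeriodDefect
  fun_prop

lemma meromorphic_halfPeriodDefect : Meromorphic (halfPeriodDefect L h) := by
  have hζ := meromorphic_weierstrassZeta (L := L)
  have hshift : Meromorphic (fun w ↦ weierstrassZeta L (w + h)) := fun z ↦
    meromorphicAt_fun_comp_add_const_iff_meromorphicAt.mpr (hζ (z + h))
  unfold halfPeriodDefect
  fun_prop

/-- The double zero of `ζ(z + h) - ζ(h) - (ζ(z) - 1 / z) + ℘(h) z` at the origin cancels the double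
pole of `℘`. -/
lemma meromorphicOrderAt_halfPeriodDefect_zero (hh : h ∉ L.lattice) :
    0 ≤ meromorphicOrderAt (halfPeriodDefect L h) 0 := by
  have h0 : 0 + h ∉ L.lattice := by rwa [zero_add]
  have hshift : AnalyticAt ℂ (fun z ↦ weierstrassZeta L (z + h)) 0 :=
    (analyticAt_weierstrassZeta h0).fun_comp (f := fun w ↦ w + h) (by fun_prop)
  have hreg := analyticAt_weierstrassZetaReg_zero (L := L)
  have := L.analyticAt_derivWeierstrassPExcept 0
  have hP := L.analyticAt_weierstrassPExcept 0
  set k : ℂ → ℂ := fun z ↦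
    weierstrassZeta L (z + h) - weierstrassZeta L h - weierstrassZetaReg L z + ℘[L] h * z with hk
  have hk' : deriv k 0 = 0 := by
    have hd := ((((hasDerivAt_weierstrassZeta h0).comp_add_const 0 h).sub_const
      (weierstrassZeta L h)).sub (hasDerivAt_weierstrassZetaReg (L := L) (z := 0) (by simp))).add
      ((hasDerivAt_id (0 : ℂ)).const_mul (℘[L] h))
    exact (show HasDerivAt k _ 0 from hd).deriv.trans (by simp)
  obtain ⟨k₁, hk₁, hk₁0, hkk₁⟩ :=
    exists_analyticAt_eq_sub_mul (f := k) (a := 0) (by fun_prop) (by simp [hk])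
  obtain ⟨k₂, hk₂, -, hkk₂⟩ := exists_analyticAt_eq_sub_mul hk₁ (hk₁0.trans hk')
  obtain ⟨p, hp, -, hPp⟩ := exists_analyticAt_eq_sub_mul hP (L.weierstrassPExcept_zero 0)
  refine meromorphic_halfPeriodDefect 0 |>.meromorphicOrderAt_nonneg_iff.mpr
    ⟨fun z ↦ k₂ z - p z + (weierstrassZeta L (z + h) - weierstrassZeta L h -
      weierstrassZetaReg L z) * (L.weierstrassPExcept 0 z - ℘[L] h) -
      L.derivWeierstrassPExcept 0 z / 2, by fun_prop, ?_⟩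
  filter_upwards [self_mem_nhdsWithin] with w hw
  have hw0 : w ≠ 0 := hw
  have hPw := L.weierstrassPExcept_add 0 w
  have hP'w := L.derivWeierstrassPExcept_sub 0 w
  have hkw := hkk₁ w
  simp only [ZeroMemClass.coe_zero, sub_zero] at hPw hP'w
  rw [hkk₂ w, sub_zero] at hkw
  have hζw : weierstrassZeta L (w + h) =
      w * (w * k₂ w) - ℘[L] h * w + weierstrassZeta L h + weierstrassZetaReg L w := by
    linear_combination hkw
  rw [halfPeriodDefect, ← hPw, ← hP'w, weierstrassZeta_eq_reg_add L w, hζw, hPp w, sub_zero]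
  field_simp
  ring

lemma meromorphicOrderAt_halfPeriodDefect_neg (hh : h ∉ L.lattice) :
    0 ≤ meromorphicOrderAt (halfPeriodDefect L h) (-h) := by
  have hh' : -h ∉ L.lattice := neg_mem_iff.not.mpr hh
  have hreg : AnalyticAt ℂ (fun z ↦ weierstrassZetaReg L (z + h)) (-h) :=
    analyticAt_weierstrassZetaReg_zero.fun_comp_of_eq (by fun_prop) (by simp)
  have hζ := analyticAt_weierstrassZeta hh'
  have hP' := L.analyticOnNhd_derivWeierstrassP _ hh'
  have hP := L.analyticOnNhd_weierstrassP _ hh'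
  obtain ⟨p, hp, -, hPp⟩ := exists_analyticAt_eq_sub_mul (f := fun z ↦ ℘[L] z - ℘[L] h)
    (a := -h) (by fun_prop) (by simp)
  refine meromorphic_halfPeriodDefect (-h) |>.meromorphicOrderAt_nonneg_iff.mpr
    ⟨fun z ↦ (weierstrassZetaReg L (z + h) - weierstrassZeta L z - weierstrassZeta L h) *
      (℘[L] z - ℘[L] h) + p z - ℘'[L] z / 2, by fun_prop, ?_⟩
  filter_upwards [self_mem_nhdsWithin] with w hw
  have hw0 : w + h ≠ 0 := fun h0 ↦ hw (eq_neg_of_add_eq_zero_left h0)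
  have hPw := hPp w
  rw [sub_neg_eq_add] at hPw
  rw [halfPeriodDefect, weierstrassZeta_eq_reg_add L (w + h), hPw]
  field_simp
  ring

lemma eventually_halfPeriodDefect_add {l : ℂ} (hl : l ∈ L.lattice) (z : ℂ) :
    ∀ᶠ w in 𝓝[≠] z, halfPeriodDefect L h (w + l) = halfPeriodDefect L h w := by
  filter_upwards [eventually_notMem_lattice L z, (tendsto_add_const_punctured z h).eventually
    (eventually_notMem_lattice L (z + h))] with w hw hwh using halfPeriodDefect_add hl hw hwh

lemma meromorphicOrderAt_halfPeriodDefect_nonneg (hh : h ∉ L.lattice) (z : ℂ) :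
    0 ≤ meromorphicOrderAt (halfPeriodDefect L h) z := by
  have htranslate {a l : ℂ} (hl : l ∈ L.lattice)
      (ha : 0 ≤ meromorphicOrderAt (halfPeriodDefect L h) a) :
      0 ≤ meromorphicOrderAt (halfPeriodDefect L h) (a + l) := by
    rwa [← meromorphicOrderAt_fun_comp_add_const_eq_meromorphicOrderAt,
      meromorphicOrderAt_congr (eventually_halfPeriodDefect_add hl a)]
  by_cases hz : z ∈ L.lattice
  · simpa using htranslate hz (meromorphicOrderAt_halfPeriodDefect_zero hh)
  by_cases hzh : z + h ∈ L.lattice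
  · simpa using htranslate hzh (meromorphicOrderAt_halfPeriodDefect_neg hh)
  exact (analyticAt_halfPeriodDefect hz hzh).meromorphicOrderAt_nonneg

/-- The defect is constant by Liouville's theorem, and it is odd. -/
lemma halfPeriodDefect_eq_zero (h2 : h + h ∈ L.lattice) (hh : h ∉ L.lattice) {z : ℂ}
    (hz : z ∉ L.lattice) (hzh : z + h ∉ L.lattice) : halfPeriodDefect L h z = 0 := by
  obtain ⟨c, hc⟩ := exists_eventuallyEq_const_of_periodic (L := L)
    meromorphic_halfPeriodDefect (meromorphicOrderAt_halfPeriodDefect_nonneg hh)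
    fun l hl z ↦ eventually_halfPeriodDefect_add hl z
  have heq (w : ℂ) (hw : w ∉ L.lattice) (hwh : w + h ∉ L.lattice) :
      halfPeriodDefect L h w = c :=
    tendsto_nhds_unique_of_eventuallyEq
      ((analyticAt_halfPeriodDefect hw hwh).continuousAt.tendsto.mono_left nhdsWithin_le_nhds)
      tendsto_const_nhds (hc w)
  have hneg := heq (-z) (neg_mem_iff.not.mpr hz) ((neg_add_mem_lattice_iff h2).not.mpr hzh)
  rw [halfPeriodDefect_neg h2 hh hzh, heq z hz hzh] at hneg
  rw [heq z hz hzh]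
  exact CharZero.eq_neg_self_iff.mp hneg.symm

lemma weierstrassZeta_add_halfPeriod (h2 : h + h ∈ L.lattice) (hh : h ∉ L.lattice) {z : ℂ}
    (hz : z ∉ L.lattice) (hzh : z + h ∉ L.lattice) :
    (weierstrassZeta L (z + h) - weierstrassZeta L z - weierstrassZeta L h) *
      (℘[L] z - ℘[L] h) = ℘'[L] z / 2 :=
  sub_eq_zero.mp (halfPeriodDefect_eq_zero h2 hh hz hzh)

end HalfPeriod

section Eisenstein

lemma sqrtm3_sq : sqrtm3 ^ 2 = -3 := by
  rw [sqrtm3, mul_pow, I_sq, ← ofReal_pow, Real.sq_sqrt (by norm_num)]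
  norm_num

lemma sqrtm3_ne_zero : sqrtm3 ≠ 0 := by simp [sqrtm3]

lemma tau_eq : tau = (-1 + sqrtm3) / 2 := rfl

lemma tau_sq : tau ^ 2 = -1 - tau := by
  rw [tau_eq]
  linear_combination sqrtm3_sq / 4

lemma tau_cube : tau ^ 3 = 1 := by linear_combination (tau - 1) * tau_sq

lemma tau_re : tau.re = -1 / 2 := by simp [tau]

lemma tau_im : tau.im = √3 / 2 := by simp [tau]

lemma conj_sqrtm3 : conj sqrtm3 = -sqrtm3 := by simp [sqrtm3]

lemma conj_tau : conj tau = -1 - tau := by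
  rw [tau_eq, map_div₀, map_add, conj_sqrtm3, map_neg, map_one, map_ofNat]
  ring

lemma tau_ne_one : tau ≠ 1 := fun h ↦ by
  have := congrArg Complex.im h
  simp [tau_im] at this

lemma mem_Eis_iff {x : ℂ} : x ∈ Eis ↔ ∃ m n : ℤ, x = m + n * tau := by
  constructor
  · intro hx
    induction hx using Subring.closure_induction with
    | mem x hx => exact ⟨0, 1, by simpa using hx⟩
    | zero => exact ⟨0, 0, by simp⟩
    | one => exact ⟨1, 0, by simp⟩
    | add x y _ _ hx hy =>
      obtain ⟨m, n, rfl⟩ := hx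
      obtain ⟨m', n', rfl⟩ := hy
      exact ⟨m + m', n + n', by push_cast; ring⟩
    | neg x _ hx =>
      obtain ⟨m, n, rfl⟩ := hx
      exact ⟨-m, -n, by push_cast; ring⟩
    | mul x y _ _ hx hy =>
      obtain ⟨m, n, rfl⟩ := hx
      obtain ⟨m', n', rfl⟩ := hy
      exact ⟨m * m' - n * n', m * n' + n * m' - n * n', by
        push_cast; linear_combination (n * n' : ℂ) * tau_sq⟩
  · rintro ⟨m, n, rfl⟩
    exact add_mem (intCast_mem _ _) (mul_mem (intCast_mem _ _) (Subring.subset_closure rfl))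

end Eisenstein

section Symmetry

open Filter Topology
open scoped PeriodPair

variable {L : PeriodPair}

lemma exists_derivWeierstrassP_ne_zero : ∃ z ∉ L.lattice, ℘'[L] z ≠ 0 := by
  by_contra! hzero
  obtain ⟨c, hc⟩ := L.isClosed_lattice.isOpen_compl.exists_is_const_of_deriv_eq_zero
    (isPreconnected_compl_lattice L)
    (fun z hz ↦ (L.analyticOnNhd_weierstrassP z hz).differentiableAt.differentiableWithinAt)
    (fun z hz ↦ by rw [L.deriv_weierstrassP]; exact hzero z hz)
  have hconst : ℘[L] =ᶠ[𝓝[≠] 0] fun _ ↦ c := by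
    filter_upwards [eventually_notMem_lattice L 0] with z hz using hc z hz
  have horder : (0 : WithTop ℤ) ≤ -2 := by
    rw [← L.order_weierstrassP 0 (zero_mem _), meromorphicOrderAt_congr hconst]
    exact analyticAt_const.meromorphicOrderAt_nonneg
  exact absurd horder (by decide)

lemma deriv_derivWeierstrassP {z : ℂ} (hz : z ∉ L.lattice) :
    deriv ℘'[L] z = 6 * ℘[L] z ^ 2 - L.g₂ / 2 := by
  have hP' := L.analyticOnNhd_derivWeierstrassP
  have hP := L.analyticOnNhd_weierstrassP
  have hmul : ∀ w ∈ (L.lattice : Set ℂ)ᶜ,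
      ℘'[L] w * (deriv ℘'[L] w - (6 * ℘[L] w ^ 2 - L.g₂ / 2)) = 0 := by
    intro w hw
    have hdP : HasDerivAt ℘[L] (℘'[L] w) w :=
      L.deriv_weierstrassP ▸ (hP w hw).differentiableAt.hasDerivAt
    have hleft := (hP' w hw).differentiableAt.hasDerivAt.fun_pow 2
    have hright := (((hdP.fun_pow 3).const_mul 4).sub (hdP.const_mul L.g₂)).sub_const L.g₃
    have heq := (hright.congr_of_eventuallyEq <| by
      filter_upwards [L.isClosed_lattice.isOpen_compl.mem_nhds hw] with u hu
      exact L.derivWeierstrassP_sq u hu).unique hleft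
    push_cast at heq
    linear_combination -heq / 2
  obtain ⟨w, hw, hne⟩ := exists_derivWeierstrassP_ne_zero (L := L)
  rcases AnalyticOnNhd.eq_zero_or_eq_zero_of_mul_eq_zero hP'
    (hP'.deriv.sub ((analyticOnNhd_const.mul (hP.pow 2)).sub analyticOnNhd_const)) hmul
    (isPreconnected_compl_lattice L) with h | h
  · exact absurd (h w hw) hne
  · exact sub_eq_zero.mp (h z hz)

lemma hasSum_symm_weierstrassZeta (L : PeriodPair) (z : ℂ) :
    HasSum (fun l : L.lattice ↦ 1 / (z - l) + 1 / (z + l) + 2 * z / (l : ℂ) ^ 2)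
      (2 * weierstrassZeta L z) := by
  have hneg := (hasSum_weierstrassZeta L (-z)).neg
  rw [weierstrassZeta_neg, neg_neg] at hneg
  have hsum := (hasSum_weierstrassZeta L z).add hneg
  rw [← two_mul] at hsum
  refine hsum.congr_fun fun l ↦ ?_
  rw [weierstrassZetaSummand, weierstrassZetaSummand, ← neg_add', div_neg]
  ring

namespace IsQuasiPeriod

variable {l l' η η' : ℂ}

lemma neg (h : IsQuasiPeriod L l η) (hl : l ∈ L.lattice) : IsQuasiPeriod L (-l) (-η) := by
  intro z hz
  have := h (z + -l) ((add_mem_lattice_iff (neg_mem hl)).not.mpr hz)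
  rw [neg_add_cancel_right] at this
  rw [this, add_neg_cancel_right]

lemma add (h : IsQuasiPeriod L l η) (hl : l ∈ L.lattice) (h' : IsQuasiPeriod L l' η') :
    IsQuasiPeriod L (l + l') (η + η') := by
  intro z hz
  rw [← add_assoc, h' _ ((add_mem_lattice_iff hl).not.mpr hz), h z hz, add_assoc]

lemma weierstrassZeta_half (h : IsQuasiPeriod L l η) (hl : l / 2 ∉ L.lattice) :
    weierstrassZeta L (l / 2) = η / 2 := by
  have := h _ (neg_mem_iff.not.mpr hl)
  rw [neg_add_eq_sub, sub_half, weierstrassZeta_neg] at this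
  linear_combination this / 2

end IsQuasiPeriod

lemma weierstrassP_conj (hconj : ∀ l ∈ L.lattice, conj l ∈ L.lattice) (z : ℂ) :
    ℘[L] (conj z) = conj (℘[L] z) := by
  have hinv : Function.Involutive fun l : L.lattice ↦ (⟨conj l, hconj l l.2⟩ : L.lattice) :=
    fun l ↦ Subtype.ext (conj_conj _)
  rw [PeriodPair.weierstrassP, PeriodPair.weierstrassP, conj_tsum,
    ← (Function.Involutive.toPerm _ hinv).tsum_eq]
  simp

variable (hτ : ∀ l ∈ L.lattice, tau * l ∈ L.lattice)

/-- Multiplication by `τ` as a permutation of a lattice stable under it. -/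
def tauMulEquiv : L.lattice ≃ L.lattice where
  toFun l := ⟨tau * l, hτ l l.2⟩
  invFun l := ⟨tau * (tau * l), hτ _ (hτ l l.2)⟩
  left_inv l := by ext; linear_combination (l : ℂ) * tau_cube
  right_inv l := by ext; linear_combination (l : ℂ) * tau_cube

lemma coe_tauMulEquiv (l : L.lattice) : (tauMulEquiv hτ l : ℂ) = tau * l := rfl

lemma inv_tau : tau⁻¹ = tau ^ 2 :=
  inv_eq_of_mul_eq_one_right (by linear_combination tau_cube)

include hτ

lemma weierstrassP_tau_mul (z : ℂ) : ℘[L] (tau * z) = tau * ℘[L] z := by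
  rw [PeriodPair.weierstrassP, PeriodPair.weierstrassP, ← (tauMulEquiv hτ).tsum_eq,
    ← tsum_mul_left]
  refine tsum_congr fun l ↦ ?_
  simp only [coe_tauMulEquiv, ← mul_sub, mul_pow, one_div, mul_inv, ← inv_pow tau, inv_tau]
  linear_combination tau * (((z - l) ^ 2)⁻¹ - ((l : ℂ) ^ 2)⁻¹) * tau_cube

lemma weierstrassZeta_tau_mul (z : ℂ) :
    weierstrassZeta L (tau * z) = tau ^ 2 * weierstrassZeta L z := by
  rw [weierstrassZeta, weierstrassZeta, ← (tauMulEquiv hτ).tsum_eq, ← tsum_mul_left]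
  refine tsum_congr fun l ↦ ?_
  simp only [weierstrassZetaSummand, coe_tauMulEquiv, ← mul_sub, mul_pow, mul_inv,
    div_eq_mul_inv, ← inv_pow tau, inv_tau]
  linear_combination tau ^ 2 * z * ((l : ℂ) ^ 2)⁻¹ * tau_cube

lemma g₂_eq_zero_of_tau : L.g₂ = 0 := by
  have hG : L.G 4 = tau ^ 2 * L.G 4 := by
    conv_lhs => rw [PeriodPair.G, ← (tauMulEquiv hτ).tsum_eq]
    rw [PeriodPair.G, ← tsum_mul_left]
    refine tsum_congr fun l ↦ ?_
    rw [coe_tauMulEquiv, mul_pow, mul_inv, ← inv_pow tau, inv_tau]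
    linear_combination (tau ^ 5 + tau ^ 2) * ((l : ℂ) ^ 4)⁻¹ * tau_cube
  have hne : 1 - tau ^ 2 ≠ 0 := fun h ↦ tau_ne_one (by linear_combination tau * h + tau_cube)
  have hmul : (1 - tau ^ 2) * L.G 4 = 0 := by linear_combination hG
  rw [PeriodPair.g₂, (mul_eq_zero.mp hmul).resolve_left hne, mul_zero]

lemma IsQuasiPeriod.tau_mul {l η : ℂ} (h : IsQuasiPeriod L l η) :
    IsQuasiPeriod L (tau * l) (tau ^ 2 * η) := by
  intro z hz
  have hz' : tau ^ 2 * z ∉ L.lattice := fun hmem ↦ hz <| by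
    rw [show z = tau * (tau ^ 2 * z) by linear_combination -z * tau_cube]
    exact hτ _ hmem
  have hshift := congrArg (tau ^ 2 * ·) (h _ hz')
  simp only [mul_add, ← weierstrassZeta_tau_mul hτ] at hshift
  rwa [show tau * (tau ^ 2 * z) = z by linear_combination z * tau_cube] at hshift

variable {v l : ℂ} (hv : tau * v = v + l)

include hv

lemma weierstrassP_eq_zero_of_tau_mul (hl : l ∈ L.lattice) : ℘[L] v = 0 := by
  have h := weierstrassP_tau_mul hτ v
  rw [hv, weierstrassP_add hl] at h
  exact (mul_eq_zero.mp (by linear_combination h : (1 - tau) * ℘[L] v = 0)).resolve_left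
    (sub_ne_zero.mpr tau_ne_one.symm)

lemma IsQuasiPeriod.weierstrassZeta_of_tau_mul {η : ℂ} (h : IsQuasiPeriod L l η)
    (hvL : v ∉ L.lattice) : (tau ^ 2 - 1) * weierstrassZeta L v = η := by
  have h' := weierstrassZeta_tau_mul hτ v
  rw [hv, h v hvL] at h'
  linear_combination -h'

end Symmetry

section Hexagonal

open scoped PeriodPair

/-- The lattice `ω ℤ[τ]` with the basis `ω`, `ω τ`. -/
def hexPair (ω : ℝ) (hω : 0 < ω) : PeriodPair where
  ω₁ := ω
  ω₂ := ω * tau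
  indep := by
    rw [LinearIndependent.pair_iff]
    intro s t h
    have him : t = 0 := by simpa [tau_im, hω.ne'] using congrArg Complex.im h
    subst him
    simpa [hω.ne'] using congrArg Complex.re h

variable {ω : ℝ} {hω : 0 < ω}

lemma mem_hexPair {z : ℂ} :
    z ∈ (hexPair ω hω).lattice ↔ ∃ m n : ℤ, z = ω * (m + n * tau) := by
  rw [PeriodPair.mem_lattice]
  simp only [hexPair]
  refine exists₂_congr fun m n ↦ ?_
  rw [eq_comm, mul_add, mul_comm (m : ℂ), mul_left_comm]

lemma inLattice_iff_mem_hexPair {z : ℂ} : inLattice ω z ↔ z ∈ (hexPair ω hω).lattice := by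
  rw [mem_hexPair]
  constructor
  · rintro ⟨⟨a, ha⟩, rfl⟩
    obtain ⟨m, n, rfl⟩ := mem_Eis_iff.mp ha
    exact ⟨m, n, rfl⟩
  · rintro ⟨m, n, rfl⟩
    exact ⟨⟨_, mem_Eis_iff.mpr ⟨m, n, rfl⟩⟩, rfl⟩

variable (hω) in
lemma wp_eq_weierstrassP : wp ω = ℘[hexPair ω hω] := by
  funext z
  have hsupp : {w : ℂ | inLattice ω w ∧ w ≠ 0}.indicator (fun l ↦ 1 / (z - l) ^ 2 - 1 / l ^ 2) =
      ((hexPair ω hω).lattice : Set ℂ).indicator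
        fun l ↦ if l = 0 then 0 else 1 / (z - l) ^ 2 - 1 / l ^ 2 := by
    ext w
    by_cases hw : w ∈ (hexPair ω hω).lattice <;> by_cases h0 : w = 0 <;>
      simp [Set.indicator, inLattice_iff_mem_hexPair (hω := hω), hw, h0]
  have hsum := congrArg (fun f ↦ ∑' w, f w) hsupp
  simp only [← tsum_subtype] at hsum
  calc wp ω z = (hexPair ω hω).weierstrassPExcept 0 z + (1 / (z - 0) ^ 2 - 1 / 0 ^ 2) := by
        rw [wp, add_comm, sub_zero, zero_pow two_ne_zero, div_zero, sub_zero]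
        exact congrArg (· + _) hsum
    _ = ℘[hexPair ω hω] z := (hexPair ω hω).weierstrassPExcept_add 0 z

lemma tau_mul_mem_hexPair : ∀ l ∈ (hexPair ω hω).lattice, tau * l ∈ (hexPair ω hω).lattice := by
  intro l hl
  obtain ⟨m, n, rfl⟩ := mem_hexPair.mp hl
  exact mem_hexPair.mpr ⟨-n, m - n, by push_cast; linear_combination (ω * n : ℂ) * tau_sq⟩

lemma conj_mem_hexPair : ∀ l ∈ (hexPair ω hω).lattice, conj l ∈ (hexPair ω hω).lattice := by
  intro l hl
  obtain ⟨m, n, rfl⟩ := mem_hexPair.mp hl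
  refine mem_hexPair.mpr ⟨m - n, -n, ?_⟩
  simp only [map_mul, map_add, map_intCast, conj_ofReal, conj_tau]
  push_cast
  ring

lemma ofReal_mul_sqrtm3_notMem_hexPair {t : ℝ} (h0 : 0 < t) (h1 : t < ω) :
    (t : ℂ) * sqrtm3 ∉ (hexPair ω hω).lattice := by
  intro h
  obtain ⟨m, n, hmn⟩ := mem_hexPair.mp h
  have hre : (m : ℝ) + n * (-1 / 2) = 0 := by
    simpa [sqrtm3, tau_re, hω.ne'] using (congrArg Complex.re hmn).symm
  have him : t * √3 = ω * (n * (√3 / 2)) := by simpa [sqrtm3, tau_im] using congrArg Complex.im hmn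
  have htm : t = ω * m := mul_right_cancel₀ (by positivity : √3 ≠ 0)
    (by linear_combination him - ω * √3 * hre)
  have hm0 : (0 : ℝ) < m := pos_of_mul_pos_right (htm ▸ h0) hω.le
  have hm1 : (m : ℝ) < 1 := by nlinarith
  have : 0 < m := mod_cast hm0
  have : m < 1 := mod_cast hm1
  omega

section SpecialValues

variable (ω) in
/-- The 3-torsion point `ω √-3 / 3` of `ℂ / ω ℤ[τ]`, fixed by `τ`. -/
def threeTorsion : ℂ := (ω / 3 : ℝ) * sqrtm3

variable (hω)

lemma threeTorsion_notMem : threeTorsion ω ∉ (hexPair ω hω).lattice :=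
  ofReal_mul_sqrtm3_notMem_hexPair (by positivity) (by linarith)

variable (ω) in
lemma tau_mul_threeTorsion : tau * threeTorsion ω = threeTorsion ω + -(ω + tau * ω) := by
  rw [threeTorsion, tau_eq]
  push_cast
  linear_combination ω / 6 * sqrtm3_sq

lemma add_tau_mul_mem_hexPair : ω + tau * ω ∈ (hexPair ω hω).lattice :=
  mem_hexPair.mpr ⟨1, 1, by push_cast; ring⟩

lemma weierstrassP_threeTorsion : ℘[hexPair ω hω] (threeTorsion ω) = 0 :=
  weierstrassP_eq_zero_of_tau_mul tau_mul_mem_hexPair (tau_mul_threeTorsion ω)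
    (neg_mem (add_tau_mul_mem_hexPair hω))

lemma g₃_hexPair_eq_one
    (hODE : ∀ z : ℂ, ¬ inLattice ω z → deriv (wp ω) z ^ 2 = 4 * wp ω z ^ 3 - 1) :
    (hexPair ω hω).g₃ = 1 := by
  have hv := threeTorsion_notMem hω
  have h := hODE _ (inLattice_iff_mem_hexPair.not.mpr hv)
  rw [wp_eq_weierstrassP hω, PeriodPair.deriv_weierstrassP,
    PeriodPair.derivWeierstrassP_sq _ _ hv, g₂_eq_zero_of_tau tau_mul_mem_hexPair] at h
  linear_combination -h

lemma weierstrassP_eq_re {z : ℂ} (hz : conj z = z ∨ conj z = -z) :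
    ℘[hexPair ω hω] z = ((℘[hexPair ω hω] z).re : ℂ) := by
  have h := weierstrassP_conj (L := hexPair ω hω) conj_mem_hexPair z
  refine (conj_eq_iff_re.mp ?_).symm
  rcases hz with hz | hz <;> rw [← h, hz]
  exact PeriodPair.weierstrassP_neg _ z

lemma hasDerivAt_re_derivWeierstrassP {t : ℝ} (h0 : 0 < t) (h1 : t < ω) :
    HasDerivAt (fun t : ℝ ↦ (sqrtm3 * ℘'[hexPair ω hω] (t * sqrtm3)).re)
      (-18 * (℘[hexPair ω hω] (t * sqrtm3)).re ^ 2) t := by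
  have hmem := ofReal_mul_sqrtm3_notMem_hexPair (hω := hω) h0 h1
  have hreal := weierstrassP_eq_re hω (z := t * sqrtm3) (Or.inr (by simp [conj_sqrtm3]))
  have hP' := ((hexPair ω hω).analyticOnNhd_derivWeierstrassP _ hmem).differentiableAt.hasDerivAt
  rw [deriv_derivWeierstrassP hmem, g₂_eq_zero_of_tau tau_mul_mem_hexPair] at hP'
  have hcomp := ((hP'.comp (t : ℂ) ((hasDerivAt_id (t : ℂ)).mul_const sqrtm3)).const_mul
    sqrtm3).real_of_complex
  refine hcomp.congr_deriv ?_
  rw [hreal, ofReal_re, ← ofReal_re (-18 * _)]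
  congr 1
  push_cast
  linear_combination 6 * ((℘[hexPair ω hω] (t * sqrtm3)).re : ℂ) ^ 2 * sqrtm3_sq

lemma antitoneOn_re_derivWeierstrassP :
    AntitoneOn (fun t : ℝ ↦ (sqrtm3 * ℘'[hexPair ω hω] (t * sqrtm3)).re)
      (Set.Icc (ω / 3) (ω / 2)) := by
  have hder : ∀ t ∈ Set.Icc (ω / 3) (ω / 2), HasDerivAt _ _ t := fun t ht ↦
    hasDerivAt_re_derivWeierstrassP hω (by linarith [ht.1]) (by linarith [ht.2])
  refine antitoneOn_of_deriv_nonpos (convex_Icc _ _)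
    (fun t ht ↦ (hder t ht).continuousAt.continuousWithinAt)
    (fun t ht ↦ (hder t (interior_subset ht)).differentiableAt.differentiableWithinAt)
    fun t ht ↦ ?_
  rw [(hder t (interior_subset ht)).deriv]
  nlinarith [sq_nonneg (℘[hexPair ω hω] (t * sqrtm3)).re]

/-- On the imaginary axis `I ℘'` is real and decreasing, and it vanishes at the half-period
`ω √-3 / 2`; this picks out the square root of `℘'(v)² = -1`. -/
lemma derivWeierstrassP_threeTorsion (hg₃ : (hexPair ω hω).g₃ = 1) :
    ℘'[hexPair ω hω] (threeTorsion ω) = -I := by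
  let D (t : ℝ) : ℝ := (sqrtm3 * ℘'[hexPair ω hω] (t * sqrtm3)).re
  have hle : ω / 3 ≤ ω / 2 := by linarith
  have hzero : D (ω / 2) = 0 := by
    have : ℘'[hexPair ω hω] ((ω / 2 : ℝ) * sqrtm3) = 0 :=
      derivWeierstrassP_halfPeriod (mem_hexPair.mpr ⟨1, 2, by rw [tau_eq]; push_cast; ring⟩)
    simp only [D, this, mul_zero, zero_re]
  have hnonneg : 0 ≤ D (ω / 3) :=
    hzero ▸ antitoneOn_re_derivWeierstrassP hω
      (Set.left_mem_Icc.mpr hle) (Set.right_mem_Icc.mpr hle) hle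
  have hsq : ℘'[hexPair ω hω] (threeTorsion ω) ^ 2 = I ^ 2 := by
    rw [PeriodPair.derivWeierstrassP_sq _ _ (threeTorsion_notMem hω),
      weierstrassP_threeTorsion, hg₃, I_sq]
    ring
  refine (sq_eq_sq_iff_eq_or_eq_neg.mp hsq).resolve_left fun h ↦ ?_
  have hthird : D (ω / 3) = (sqrtm3 * I).re := congrArg (fun w ↦ (sqrtm3 * w).re) h
  have hneg : (sqrtm3 * I).re = -√3 := by simp [sqrtm3]
  linarith [Real.sqrt_pos.mpr three_pos]

lemma cbrt4_pow_three : cbrt4 ^ 3 = 4 := by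
  rw [cbrt4, ← ofReal_pow, ← Real.rpow_natCast, ← Real.rpow_mul (by norm_num)]
  norm_num

lemma weierstrassP_half_mul_cbrt4 (hg₃ : (hexPair ω hω).g₃ = 1) :
    ℘[hexPair ω hω] (ω / 2) * cbrt4 = 1 := by
  have hmem : (ω / 2 : ℂ) ∉ (hexPair ω hω).lattice := (hexPair ω hω).ω₁_div_two_notMem_lattice
  have hcubic := PeriodPair.derivWeierstrassP_sq _ _ hmem
  rw [derivWeierstrassP_halfPeriod (by rw [add_halves]; exact (hexPair ω hω).ω₁_mem_lattice),
    g₂_eq_zero_of_tau tau_mul_mem_hexPair, hg₃] at hcubic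
  have hreal := weierstrassP_eq_re hω (z := ω / 2) (Or.inl (by simp [map_ofNat]))
  have hcube : (℘[hexPair ω hω] (ω / 2) * cbrt4) ^ 3 = 1 := by
    linear_combination ℘[hexPair ω hω] (ω / 2) ^ 3 * cbrt4_pow_three - hcubic
  rw [hreal, cbrt4, ← ofReal_mul, ← ofReal_one] at hcube ⊢
  rw [← ofReal_pow, ofReal_inj, pow_eq_one_iff_of_ne_zero three_ne_zero] at hcube
  rw [hcube.resolve_right (by simp +decide)]

end SpecialValues

section SixTorsion

variable (ω) in
/-- The 6-torsion point `ω / (2 √-3)` of `ℂ / ω ℤ[τ]`. -/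
def sixTorsion : ℂ := ω / (2 * sqrtm3)

variable (ω) in
lemma sixTorsion_eq : sixTorsion ω = threeTorsion ω + ω / 2 + -(ω + tau * ω) := by
  rw [sixTorsion, threeTorsion, tau_eq, div_eq_iff (mul_ne_zero two_ne_zero sqrtm3_ne_zero)]
  push_cast
  linear_combination ω / 3 * sqrtm3_sq

variable (ω) in
lemma seven_mul_sixTorsion :
    7 * sixTorsion ω = sixTorsion ω + (-(ω + tau * ω) + -(tau * ω)) := by
  rw [sixTorsion_eq, threeTorsion, tau_eq]
  push_cast
  ring

variable (hω)

lemma sixTorsion_notMem : sixTorsion ω ∉ (hexPair ω hω).lattice := by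
  refine neg_mem_iff.not.mp ?_
  rw [show -sixTorsion ω = (ω / 6 : ℝ) * sqrtm3 by
    rw [sixTorsion, eq_comm, ← neg_div, eq_div_iff (mul_ne_zero two_ne_zero sqrtm3_ne_zero)]
    push_cast
    linear_combination ω / 3 * sqrtm3_sq]
  exact ofReal_mul_sqrtm3_notMem_hexPair (by positivity) (by linarith)

lemma threeTorsion_add_half_notMem : threeTorsion ω + ω / 2 ∉ (hexPair ω hω).lattice := by
  rw [← add_mem_lattice_iff (neg_mem (add_tau_mul_mem_hexPair hω)), ← sixTorsion_eq]
  exact sixTorsion_notMem hω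

lemma weierstrassZeta_threeTorsion_add_half (hg₃ : (hexPair ω hω).g₃ = 1) :
    weierstrassZeta (hexPair ω hω) (threeTorsion ω + ω / 2) =
      weierstrassZeta (hexPair ω hω) (threeTorsion ω) +
        weierstrassZeta (hexPair ω hω) (ω / 2) + I * cbrt4 / 2 := by
  have hadd := weierstrassZeta_add_halfPeriod
    (by rw [add_halves]; exact (hexPair ω hω).ω₁_mem_lattice)
    (hexPair ω hω).ω₁_div_two_notMem_lattice (threeTorsion_notMem hω)
    (threeTorsion_add_half_notMem hω)
  rw [show (hexPair ω hω).ω₁ = ω from rfl, derivWeierstrassP_threeTorsion hω hg₃,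
    weierstrassP_threeTorsion] at hadd
  linear_combination -cbrt4 * hadd - (weierstrassZeta (hexPair ω hω) (threeTorsion ω + ω / 2) -
    weierstrassZeta (hexPair ω hω) (threeTorsion ω) - weierstrassZeta (hexPair ω hω) (ω / 2)) *
      weierstrassP_half_mul_cbrt4 hω hg₃

/-- The quasi-periods cancel: this combination of `ζ`-values is evaluated by the addition formula
at `v + ω / 2` alone. -/
lemma seven_mul_weierstrassZeta_sixTorsion_sub (hg₃ : (hexPair ω hω).g₃ = 1) :
    7 * weierstrassZeta (hexPair ω hω) (sixTorsion ω) -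
      weierstrassZeta (hexPair ω hω) (7 * sixTorsion ω) = 3 * I * cbrt4 := by
  have hτ := tau_mul_mem_hexPair (hω := hω)
  have hω₁ : (ω : ℂ) ∈ (hexPair ω hω).lattice := (hexPair ω hω).ω₁_mem_lattice
  obtain ⟨η, hη⟩ := exists_isQuasiPeriod hω₁
  have hητ := hη.tau_mul hτ
  have hητ' := (hη.add hω₁ hητ).neg (add_tau_mul_mem_hexPair hω)
  have hhalf : weierstrassZeta (hexPair ω hω) (ω / 2) = η / 2 :=
    hη.weierstrassZeta_half (hexPair ω hω).ω₁_div_two_notMem_lattice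
  have hthird := hητ'.weierstrassZeta_of_tau_mul hτ (tau_mul_threeTorsion ω)
    (threeTorsion_notMem hω)
  have hsix := hητ' _ (threeTorsion_add_half_notMem hω)
  rw [← sixTorsion_eq, weierstrassZeta_threeTorsion_add_half hω hg₃, hhalf] at hsix
  rw [seven_mul_sixTorsion,
    (hητ'.add (neg_mem (add_tau_mul_mem_hexPair hω)) (hητ.neg (hτ _ hω₁))) _
      (sixTorsion_notMem hω), hsix]
  linear_combination (2 * tau - 2) * hthird - ((2 * tau - 4) *
    weierstrassZeta (hexPair ω hω) (threeTorsion ω) + 2 * tau * η) * tau_sq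

end SixTorsion

end Hexagonal

section HeckeTerms

/-- The element `2 √-3 (m + n τ)` of the conductor `2 √-3 ℤ[τ]` of the Hecke character of `E₁`. -/
def conductorElt (k : ℤ × ℤ) : ℂ := 2 * sqrtm3 * (k.1 + k.2 * tau)

/-- The term `w̄ / N(w) ^ s` of the Hecke `L`-series of `E₁`, whose `w` are the elements of `ℤ[τ]`
congruent to `1` modulo the conductor. -/
def heckeTerm (s w : ℂ) : ℂ := conj w * (normSq w : ℂ) ^ (-s)

/-- A combination of the terms of the Hecke `L`-series at `l ± 1` and `l ± 7` in which the linear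
parts cancel, so that its sum over the conductor converges absolutely for `1 / 2 < s.re`. -/
def symmHeckeTerm (s l : ℂ) : ℂ :=
  7 * (heckeTerm s (l + 1) - heckeTerm s (l - 1)) - (heckeTerm s (l + 7) - heckeTerm s (l - 7))

lemma heckeTerm_one (w : ℂ) : heckeTerm 1 w = 1 / w := by
  rw [heckeTerm, cpow_neg_one, one_div, Complex.inv_def w, ofReal_inv]

lemma heckeTerm_neg (s w : ℂ) : heckeTerm s (-w) = -heckeTerm s w := by
  simp [heckeTerm]

lemma norm_heckeTerm (s : ℂ) {w : ℂ} (hw : w ≠ 0) : ‖heckeTerm s w‖ = ‖w‖ ^ (1 - 2 * s.re) := by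
  have hpos : 0 < ‖w‖ := norm_pos_iff.mpr hw
  rw [heckeTerm, norm_mul, norm_conj, norm_cpow_eq_rpow_re_of_pos (normSq_pos.mpr hw),
    normSq_eq_norm_sq, ← Real.rpow_natCast, ← Real.rpow_mul hpos.le, sub_eq_add_neg,
    Real.rpow_add hpos, Real.rpow_one, neg_re, Nat.cast_two, mul_neg]

lemma differentiable_heckeTerm {w : ℂ} (hw : w ≠ 0) : Differentiable ℂ fun s ↦ heckeTerm s w :=
  fun _ ↦ (differentiableAt_id.neg.const_cpow (Or.inl (by simpa using hw))).const_mul _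

end HeckeTerms

section SymmetricSum

variable {ω : ℝ} (hω : 0 < ω)

lemma coe_latticeEquivProd_symm_hexPair (k : ℤ × ℤ) :
    ((hexPair ω hω).latticeEquivProd.symm k : ℂ) = sixTorsion ω * conductorElt k := by
  rw [conductorElt, ← mul_assoc, sixTorsion,
    div_mul_cancel₀ _ (mul_ne_zero two_ne_zero sqrtm3_ne_zero)]
  refine ((hexPair ω hω).latticeEquiv_symm_apply k).trans ?_
  simp only [hexPair]
  ring

lemma hasSum_seven_mul_sixTorsion (hg₃ : (hexPair ω hω).g₃ = 1) :
    HasSum (fun l : (hexPair ω hω).lattice ↦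
      7 * (1 / (sixTorsion ω - l) + 1 / (sixTorsion ω + l)) -
        (1 / (7 * sixTorsion ω - l) + 1 / (7 * sixTorsion ω + l))) (6 * I * cbrt4) := by
  have h := ((hasSum_symm_weierstrassZeta (hexPair ω hω) (sixTorsion ω)).mul_left 7).sub
    (hasSum_symm_weierstrassZeta (hexPair ω hω) (7 * sixTorsion ω))
  rw [show 6 * I * cbrt4 = 7 * (2 * weierstrassZeta (hexPair ω hω) (sixTorsion ω)) -
    2 * weierstrassZeta (hexPair ω hω) (7 * sixTorsion ω) by
      linear_combination -2 * seven_mul_weierstrassZeta_sixTorsion_sub hω hg₃]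
  exact h.congr_fun fun l ↦ by ring

lemma hasSum_symmHeckeTerm_one (hg₃ : (hexPair ω hω).g₃ = 1) :
    HasSum (fun k : ℤ × ℤ ↦ symmHeckeTerm 1 (conductorElt k))
      (12 * (cbrt4 / (4 * (√3 : ℂ)) * ω)) := by
  have hp : sixTorsion ω ≠ 0 := fun h ↦ sixTorsion_notMem hω (h ▸ zero_mem _)
  have hval : 12 * (cbrt4 / (4 * (√3 : ℂ)) * ω) = sixTorsion ω * (6 * I * cbrt4) := by
    rw [sixTorsion, sqrtm3]
    field_simp
    ring
  rw [hval]
  refine ((hexPair ω hω).latticeEquivProd.symm.toEquiv.hasSum_iff.mpr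
    ((hasSum_seven_mul_sixTorsion hω hg₃).mul_left (sixTorsion ω))).congr_fun fun k ↦ ?_
  have hadd (a x : ℂ) : sixTorsion ω * (1 / (a * sixTorsion ω + sixTorsion ω * x)) =
      1 / (x + a) := by
    rw [mul_comm a, ← mul_add, mul_one_div, add_comm x, div_mul_cancel_left₀ hp, one_div]
  have hsub (a x : ℂ) : sixTorsion ω * (1 / (a * sixTorsion ω - sixTorsion ω * x)) =
      -(1 / (x - a)) := by
    rw [mul_comm a, ← mul_sub, mul_one_div, div_mul_cancel_left₀ hp, ← one_div,
      ← neg_sub x, div_neg]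
  have hadd₁ := hadd 1 (conductorElt k)
  have hsub₁ := hsub 1 (conductorElt k)
  rw [one_mul] at hadd₁ hsub₁
  simp only [Function.comp_apply, LinearEquiv.coe_toEquiv, coe_latticeEquivProd_symm_hexPair,
    symmHeckeTerm, heckeTerm_one]
  linear_combination hadd 7 (conductorElt k) + hsub 7 (conductorElt k) - 7 * hadd₁ - 7 * hsub₁

end SymmetricSum

section SymmetricDifference

/-- The mean value inequality twice: `x ↦ a • (f x - f (-x)) - (f (a x) - f (-a x))` has derivative
`a • (f' x + f' (-x) - f' (a x) - f' (-a x))`. -/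
lemma norm_smul_sub_sub_le_of_hasDerivAt {E : Type*} [NormedAddCommGroup E] [NormedSpace ℝ E]
    {f f' f'' : ℝ → E} {a M : ℝ} (ha : 1 ≤ a)
    (hf : ∀ x ∈ Set.Icc (-a) a, HasDerivAt f (f' x) x)
    (hf' : ∀ x ∈ Set.Icc (-a) a, HasDerivAt f' (f'' x) x)
    (hM : ∀ x ∈ Set.Icc (-a) a, ‖f'' x‖ ≤ M) :
    ‖a • (f 1 - f (-1)) - (f a - f (-a))‖ ≤ 2 * a * (a - 1) * M := by
  have hM0 : 0 ≤ M := (norm_nonneg _).trans (hM 0 ⟨by linarith, by linarith⟩)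
  have hlip {x y : ℝ} (hx : x ∈ Set.Icc (-a) a) (hy : y ∈ Set.Icc (-a) a)
      (hxy : |x - y| ≤ a - 1) : ‖f' x - f' y‖ ≤ M * (a - 1) :=
    ((convex_Icc _ _).norm_image_sub_le_of_norm_hasDerivWithin_le
      (fun z hz ↦ (hf' z hz).hasDerivWithinAt) hM hy hx).trans
        (mul_le_mul_of_nonneg_left hxy hM0)
  have hscale (c : ℝ) {x : ℝ} (hx : c * x ∈ Set.Icc (-a) a) :
      HasDerivAt (fun y ↦ f (c * y)) (c • f' (c * x)) x :=
    (hf _ hx).scomp x (hasDerivAt_const_mul c)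
  have hderiv : ∀ x ∈ Set.Icc (0 : ℝ) 1,
      HasDerivAt (fun x ↦ a • (f (1 * x) - f (-1 * x)) - (f (a * x) - f (-a * x)))
        (a • ((f' x - f' (a * x)) + (f' (-x) - f' (-(a * x))))) x := by
    rintro x ⟨hx0, hx1⟩
    convert! (((hscale 1 (x := x) ⟨by linarith, by linarith⟩).sub
      (hscale (-1) ⟨by linarith, by linarith⟩)).const_smul a).sub
        ((hscale a ⟨by nlinarith, by nlinarith⟩).sub
          (hscale (-a) ⟨by nlinarith, by nlinarith⟩)) using 1
    simp only [one_mul, one_smul, neg_mul, neg_smul]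
    module
  have hbound : ∀ x ∈ Set.Icc (0 : ℝ) 1,
      ‖a • ((f' x - f' (a * x)) + (f' (-x) - f' (-(a * x))))‖ ≤ 2 * a * (a - 1) * M := by
    rintro x ⟨hx0, hx1⟩
    have hpos := hlip (x := x) (y := a * x) ⟨by linarith, by linarith⟩
      ⟨by nlinarith, by nlinarith⟩ (abs_le.mpr ⟨by nlinarith, by nlinarith⟩)
    have hneg := hlip (x := -x) (y := -(a * x)) ⟨by linarith, by linarith⟩
      ⟨by nlinarith, by nlinarith⟩ (abs_le.mpr ⟨by nlinarith, by nlinarith⟩)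
    rw [norm_smul, Real.norm_of_nonneg (by linarith)]
    nlinarith [norm_add_le (f' x - f' (a * x)) (f' (-x) - f' (-(a * x)))]
  simpa using (convex_Icc (0 : ℝ) 1).norm_image_sub_le_of_norm_hasDerivWithin_le
    (fun x hx ↦ (hderiv x hx).hasDerivWithinAt) hbound
      (Set.left_mem_Icc.mpr zero_le_one) (Set.right_mem_Icc.mpr zero_le_one)

end SymmetricDifference

section HeckeTermBounds

lemma norm_normSq_cpow (c : ℂ) {w : ℂ} (hw : w ≠ 0) :
    ‖(normSq w : ℂ) ^ c‖ = ‖w‖ ^ (2 * c.re) := by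
  rw [norm_cpow_eq_rpow_re_of_pos (normSq_pos.mpr hw), normSq_eq_norm_sq, ← Real.rpow_natCast,
    ← Real.rpow_mul (norm_nonneg w), Nat.cast_two]

lemma hasDerivAt_normSq_add_ofReal_cpow (l c : ℂ) {x : ℝ} (hx : l + x ≠ 0) :
    HasDerivAt (fun y : ℝ ↦ (normSq (l + y) : ℂ) ^ c)
      (c * (normSq (l + x) : ℂ) ^ (c - 1) * (2 * (l + x).re : ℝ)) x := by
  have hre := (hasDerivAt_id x).const_add l.re
  have hnorm : HasDerivAt (fun y : ℝ ↦ normSq (l + y)) (2 * (l + x).re) x := by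
    simp only [normSq_apply, add_re, add_im, ofReal_re, ofReal_im, add_zero]
    convert! (hre.mul hre).add_const (l.im * l.im) using 1
    simp only [id_eq]
    ring
  exact (hasStrictDerivAt_cpow_const
    (ofReal_mem_slitPlane.mpr (normSq_pos.mpr hx))).hasDerivAt.comp x hnorm.ofReal_comp

/-- The derivative of `heckeTerm s` along the real direction. -/
def heckeTermDeriv (s w : ℂ) : ℂ :=
  (normSq w : ℂ) ^ (-s) - 2 * s * (conj w * (w.re * (normSq w : ℂ) ^ (-s - 1)))

/-- The second derivative of `heckeTerm s` along the real direction. -/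
def heckeTermDeriv₂ (s w : ℂ) : ℂ :=
  -(2 * s * ((2 * w.re + conj w) * (normSq w : ℂ) ^ (-s - 1))) +
    4 * (s * (s + 1)) * (conj w * (w.re * (w.re * (normSq w : ℂ) ^ (-s - 1 - 1))))

lemma hasDerivAt_conj_add_ofReal (l : ℂ) (x : ℝ) :
    HasDerivAt (fun y : ℝ ↦ conj (l + y)) 1 x := by
  simpa using (hasDerivAt_id x).ofReal_comp.const_add (conj l)

lemma hasDerivAt_heckeTerm (s l : ℂ) {x : ℝ} (hx : l + x ≠ 0) :
    HasDerivAt (fun y : ℝ ↦ heckeTerm s (l + y)) (heckeTermDeriv s (l + x)) x := by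
  convert! (hasDerivAt_conj_add_ofReal l x).mul
    (hasDerivAt_normSq_add_ofReal_cpow l (-s) hx) using 1
  rw [heckeTermDeriv]
  push_cast
  ring

lemma hasDerivAt_heckeTermDeriv (s l : ℂ) {x : ℝ} (hx : l + x ≠ 0) :
    HasDerivAt (fun y : ℝ ↦ heckeTermDeriv s (l + y)) (heckeTermDeriv₂ s (l + x)) x := by
  have hre : HasDerivAt (fun y : ℝ ↦ ((l + y).re : ℂ)) 1 x := by
    simpa using ((hasDerivAt_id x).const_add l.re).ofReal_comp
  convert! (hasDerivAt_normSq_add_ofReal_cpow l (-s) hx).sub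
    (((hasDerivAt_conj_add_ofReal l x).mul (hre.mul
      (hasDerivAt_normSq_add_ofReal_cpow l (-s - 1) hx))).const_mul (2 * s)) using 1
  rw [heckeTermDeriv₂, Pi.mul_apply]
  push_cast
  ring

lemma norm_heckeTermDeriv₂_le (s : ℂ) {w : ℂ} (hw : w ≠ 0) :
    ‖heckeTermDeriv₂ s w‖ ≤ (6 * ‖s‖ + 4 * ‖s‖ * ‖s + 1‖) * ‖w‖ ^ (-2 * s.re - 1) := by
  have hpos : 0 < ‖w‖ := norm_pos_iff.mpr hw
  have hre : ‖(w.re : ℂ)‖ ≤ ‖w‖ := (norm_real _).trans_le (abs_re_le_norm w)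
  have hlin : ‖2 * (w.re : ℂ) + conj w‖ ≤ 3 * ‖w‖ := by
    refine (norm_add_le _ _).trans ?_
    rw [norm_mul, norm_conj, Complex.norm_two]
    linarith
  have hcpow₁ : ‖(normSq w : ℂ) ^ (-s - 1)‖ = ‖w‖ ^ (-2 * s.re - 1) / ‖w‖ := by
    rw [norm_normSq_cpow _ hw, ← Real.rpow_sub_one hpos.ne']
    congr 1
    simp only [sub_re, neg_re, one_re]
    ring
  have hcpow₂ : ‖(normSq w : ℂ) ^ (-s - 1 - 1)‖ = ‖w‖ ^ (-2 * s.re - 1) / ‖w‖ ^ 3 := by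
    rw [norm_normSq_cpow _ hw, ← Real.rpow_sub_natCast hpos.ne']
    congr 1
    simp only [sub_re, neg_re, one_re]
    push_cast
    ring
  calc ‖heckeTermDeriv₂ s w‖
    _ ≤ 2 * ‖s‖ * (3 * ‖w‖ * (‖w‖ ^ (-2 * s.re - 1) / ‖w‖)) + 4 * (‖s‖ * ‖s + 1‖) *
        (‖w‖ * (‖w‖ * (‖w‖ * (‖w‖ ^ (-2 * s.re - 1) / ‖w‖ ^ 3)))) := by
      refine (norm_add_le _ _).trans ?_
      simp only [norm_neg, norm_mul, norm_conj, hcpow₁, hcpow₂, Complex.norm_ofNat]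
      gcongr
    _ = _ := by
      field_simp
      ring

/-- The symmetrisation gains two powers of `‖l‖` over the single terms. -/
lemma norm_symmHeckeTerm_le_rpow {s l : ℂ} (hs : -1 / 2 ≤ s.re) (hl : 16 ≤ ‖l + 1‖) :
    ‖symmHeckeTerm s l‖ ≤
      84 * ((6 * ‖s‖ + 4 * ‖s‖ * ‖s + 1‖) * (‖l + 1‖ / 2) ^ (-2 * s.re - 1)) := by
  have hfar : ∀ x ∈ Set.Icc (-7 : ℝ) 7, ‖l + 1‖ / 2 ≤ ‖l + x‖ := fun x hx ↦ by
    have hdist : ‖(1 - x : ℂ)‖ ≤ 8 := by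
      rw [← ofReal_one, ← ofReal_sub, norm_real, Real.norm_eq_abs, abs_le]
      constructor <;> linarith [hx.1, hx.2]
    have htri := norm_add_le (l + x) (1 - x)
    rw [add_add_sub_cancel] at htri
    linarith
  have hne : ∀ x ∈ Set.Icc (-7 : ℝ) 7, l + x ≠ 0 := fun x hx ↦
    norm_pos_iff.mp (by linarith [hfar x hx])
  have hbound := norm_smul_sub_sub_le_of_hasDerivAt (f := fun x : ℝ ↦ heckeTerm s (l + x))
    (by norm_num) (fun x hx ↦ hasDerivAt_heckeTerm s l (hne x hx))
    (fun x hx ↦ hasDerivAt_heckeTermDeriv s l (hne x hx))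
    (fun x hx ↦ (norm_heckeTermDeriv₂_le s (hne x hx)).trans (mul_le_mul_of_nonneg_left
      (Real.rpow_le_rpow_of_nonpos (by linarith) (hfar x hx) (by linarith)) (by positivity)))
  convert! hbound using 2
  · simp [symmHeckeTerm, sub_eq_add_neg, mul_add]
  · norm_num

end HeckeTermBounds

section ConductorElements

lemma conductorElt_re (k : ℤ × ℤ) : (conductorElt k).re = -3 * k.2 := by
  have h : conductorElt k = 2 * k.1 * sqrtm3 - k.2 * sqrtm3 + k.2 * sqrtm3 ^ 2 := by
    rw [conductorElt, tau_eq]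
    ring
  rw [h, sqrtm3_sq]
  simp [sqrtm3, mul_comm]

lemma conductorElt_im (k : ℤ × ℤ) : (conductorElt k).im = √3 * (2 * k.1 - k.2) := by
  have h : conductorElt k = 2 * k.1 * sqrtm3 - k.2 * sqrtm3 + k.2 * sqrtm3 ^ 2 := by
    rw [conductorElt, tau_eq]
    ring
  rw [h, sqrtm3_sq]
  simp [sqrtm3]
  ring

lemma normSq_conductorElt_add (k : ℤ × ℤ) (x : ℤ) :
    normSq (conductorElt k + x) =
      (((x - 3 * k.2) ^ 2 + 3 * (2 * k.1 - k.2) ^ 2 : ℤ) : ℝ) := by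
  rw [normSq_apply]
  simp only [add_re, add_im, conductorElt_re, conductorElt_im, intCast_re, intCast_im]
  push_cast
  linear_combination (2 * k.1 - k.2 : ℝ) ^ 2 * Real.mul_self_sqrt (show (0 : ℝ) ≤ 3 by norm_num)

lemma one_le_norm_conductorElt_add (k : ℤ × ℤ) {x : ℤ} (hx : ¬ 3 ∣ x) :
    1 ≤ ‖conductorElt k + x‖ := by
  have hne : x - 3 * k.2 ≠ 0 := fun h ↦ hx ⟨k.2, by linarith⟩
  have hint : 1 ≤ (x - 3 * k.2) ^ 2 + 3 * (2 * k.1 - k.2) ^ 2 := by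
    nlinarith [sq_pos_of_ne_zero hne, sq_nonneg (2 * k.1 - k.2)]
  rw [← one_le_sq_iff₀ (norm_nonneg _), ← normSq_eq_norm_sq, normSq_conductorElt_add]
  exact_mod_cast hint

lemma conductorElt_add_ne_zero (k : ℤ × ℤ) {x : ℤ} (hx : ¬ 3 ∣ x) : conductorElt k + x ≠ 0 :=
  norm_pos_iff.mp (one_pos.trans_le (one_le_norm_conductorElt_add k hx))

lemma conductorElt_neg (k : ℤ × ℤ) : conductorElt (-k) = -conductorElt k := by
  simp only [conductorElt, Prod.fst_neg, Prod.snd_neg, Int.cast_neg]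
  ring

lemma conductorElt_add_six (k : ℤ × ℤ) : conductorElt k + 6 = conductorElt (k + (-1, -2)) := by
  simp only [conductorElt, tau_eq, Prod.fst_add, Prod.snd_add, Int.cast_add, Int.cast_neg,
    Int.cast_one, Int.cast_ofNat]
  linear_combination 2 * sqrtm3_sq

lemma conductorElt_injective : Function.Injective conductorElt := fun k k' h ↦ by
  have hre := congrArg re h
  have him := congrArg im h
  rw [conductorElt_re, conductorElt_re] at hre
  rw [conductorElt_im, conductorElt_im, mul_right_inj' (by positivity)] at him
  norm_cast at hre him
  ext <;> omega

lemma conductorElt_mem_hexPair (k : ℤ × ℤ) : conductorElt k ∈ (hexPair 1 one_pos).lattice := by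
  refine mem_hexPair.mpr ⟨2 * k.1 - 4 * k.2, 4 * k.1 - 2 * k.2, ?_⟩
  rw [conductorElt, tau_eq]
  push_cast
  linear_combination k.2 * sqrtm3_sq

lemma summable_norm_conductorElt_add_one_rpow {r : ℝ} (hr : r < -2) :
    Summable fun k ↦ ‖conductorElt k + 1‖ ^ r := by
  have hone : (1 : ℂ) ∈ (hexPair 1 one_pos).lattice := mem_hexPair.mpr ⟨1, 0, by simp⟩
  let shifted (k : ℤ × ℤ) : (hexPair 1 one_pos).lattice :=
    ⟨conductorElt k + 1, add_mem (conductorElt_mem_hexPair k) hone⟩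
  have hinj : Function.Injective shifted := fun _ _ h ↦
    conductorElt_injective (add_right_cancel (congrArg Subtype.val h))
  have hsum := ZLattice.summable_norm_rpow (hexPair 1 one_pos).lattice r (by simpa using hr)
  exact (hsum.comp_injective hinj).congr fun k ↦ by rw [Function.comp_apply, Submodule.coe_norm]

end ConductorElements

section SymmetricSeries

lemma norm_heckeTerm_conductorElt_add_le_one {s : ℂ} (hs : 1 / 2 ≤ s.re) (k : ℤ × ℤ) {x : ℤ}
    (hx : ¬ 3 ∣ x) : ‖heckeTerm s (conductorElt k + x)‖ ≤ 1 := by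
  rw [norm_heckeTerm s (conductorElt_add_ne_zero k hx)]
  exact Real.rpow_le_one_of_one_le_of_nonpos (one_le_norm_conductorElt_add k hx) (by linarith)

lemma symmHeckeTerm_conductorElt (s : ℂ) (k : ℤ × ℤ) :
    symmHeckeTerm s (conductorElt k) =
      7 * (heckeTerm s (conductorElt k + (1 : ℤ)) - heckeTerm s (conductorElt k + (-1 : ℤ))) -
        (heckeTerm s (conductorElt k + (7 : ℤ)) - heckeTerm s (conductorElt k + (-7 : ℤ))) := by
  simp [symmHeckeTerm, sub_eq_add_neg]

lemma norm_symmHeckeTerm_conductorElt_le {s : ℂ} (hs : 1 / 2 ≤ s.re) (k : ℤ × ℤ) :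
    ‖symmHeckeTerm s (conductorElt k)‖ ≤ 16 := by
  have hle {x : ℤ} (hx : ¬ 3 ∣ x) := norm_heckeTerm_conductorElt_add_le_one hs k hx
  rw [symmHeckeTerm_conductorElt]
  calc _ ≤ 7 * (1 + 1) + (1 + 1 : ℝ) := by
        refine norm_sub_le_of_le ?_ (norm_sub_le_of_le (hle (by decide)) (hle (by decide)))
        rw [norm_mul, Complex.norm_ofNat]
        gcongr
        exact norm_sub_le_of_le (hle (by decide)) (hle (by decide))
    _ = 16 := by norm_num

lemma exists_norm_symmHeckeTerm_conductorElt_le {σ : ℝ} (hσ : 1 / 2 ≤ σ) (R : ℝ) :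
    ∃ C, ∀ s : ℂ, σ ≤ s.re → ‖s‖ ≤ R → ∀ k,
      ‖symmHeckeTerm s (conductorElt k)‖ ≤ C * ‖conductorElt k + 1‖ ^ (-2 * σ - 1) := by
  refine ⟨84 * (6 * R + 4 * R * (R + 1)) / 2 ^ (-2 * σ - 1) + 16 / 16 ^ (-2 * σ - 1),
    fun s hs hR k ↦ ?_⟩
  have hR0 : 0 ≤ R := (norm_nonneg s).trans hR
  have hR1 : ‖s + 1‖ ≤ R + 1 := norm_add_le_of_le hR norm_one.le
  have hpos : 0 < ‖conductorElt k + 1‖ := by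
    simpa using conductorElt_add_ne_zero k (x := 1) (by decide)
  rw [add_mul]
  rcases le_or_gt 16 ‖conductorElt k + 1‖ with hfar | hnear
  · refine le_add_of_le_of_nonneg ?_ (by positivity)
    calc _ ≤ 84 * ((6 * ‖s‖ + 4 * ‖s‖ * ‖s + 1‖) *
            (‖conductorElt k + 1‖ / 2) ^ (-2 * s.re - 1)) :=
          norm_symmHeckeTerm_le_rpow (by linarith) hfar
      _ ≤ 84 * ((6 * R + 4 * R * (R + 1)) * (‖conductorElt k + 1‖ / 2) ^ (-2 * σ - 1)) := by
          gcongr 84 * (?_ * ?_)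
          · gcongr
          · exact Real.rpow_le_rpow_of_exponent_le (by linarith) (by linarith)
      _ = _ := by
          rw [Real.div_rpow hpos.le zero_le_two]
          ring
  · refine le_add_of_nonneg_of_le (by positivity) ?_
    refine (norm_symmHeckeTerm_conductorElt_le (hσ.trans hs) k).trans ?_
    rw [div_mul_eq_mul_div, le_div_iff₀ (by positivity)]
    gcongr ?_ * ?_
    exact Real.rpow_le_rpow_of_nonpos hpos hnear.le (by linarith)

lemma differentiable_symmHeckeTerm_conductorElt (k : ℤ × ℤ) :
    Differentiable ℂ fun s ↦ symmHeckeTerm s (conductorElt k) := by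
  have hdiff {x : ℤ} (hx : ¬ 3 ∣ x) :=
    differentiable_heckeTerm (conductorElt_add_ne_zero k hx)
  simp only [symmHeckeTerm_conductorElt]
  exact (((hdiff (by decide)).sub (hdiff (by decide))).const_mul 7).sub
    ((hdiff (by decide)).sub (hdiff (by decide)))

lemma differentiableOn_tsum_symmHeckeTerm :
    DifferentiableOn ℂ (fun s ↦ ∑' k, symmHeckeTerm s (conductorElt k)) {s | 1 / 2 < s.re} := by
  intro s₀ hs₀
  obtain ⟨σ, hσ, hσs⟩ := exists_between (show 1 / 2 < s₀.re from hs₀)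
  obtain ⟨C, hC⟩ := exists_norm_symmHeckeTerm_conductorElt_le hσ.le (‖s₀‖ + 1)
  let U : Set ℂ := {s | σ < s.re} ∩ {s | ‖s‖ < ‖s₀‖ + 1}
  have hU : IsOpen U := (isOpen_lt continuous_const continuous_re).inter
    (isOpen_lt continuous_norm continuous_const)
  have hdiff : DifferentiableOn ℂ (fun s ↦ ∑' k, symmHeckeTerm s (conductorElt k)) U :=
    Complex.differentiableOn_tsum_of_summable_norm
      ((summable_norm_conductorElt_add_one_rpow (by linarith)).mul_left C)
      (fun k ↦ (differentiable_symmHeckeTerm_conductorElt k).differentiableOn) hU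
      fun k s hs ↦ hC s hs.1.le hs.2.le k
  have hmem : s₀ ∈ U := ⟨hσs, lt_add_one ‖s₀‖⟩
  exact (hdiff.differentiableAt (hU.mem_nhds hmem)).differentiableWithinAt

end SymmetricSeries

section PrimaryElements

/-- `z = x + y √-3` lies in the ray `1 + 2 √-3 ℤ[τ]` of the Hecke character of `E₁`. -/
def IsPrimary (z : ℤ√(-3)) : Prop := z.re % 3 = 1 ∧ (z.re + z.im) % 2 = 1

instance : DecidablePred IsPrimary := fun _ ↦ instDecidableAnd

/-- The primary elements of norm `m`. The box only serves to make the set visibly finite. -/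
def primaryElts (m : ℕ) : Finset (ℤ√(-3)) :=
  ((Finset.Icc (-m : ℤ) m ×ˢ Finset.Icc (-m : ℤ) m).image fun v ↦ ⟨v.1, v.2⟩).filter
    fun z ↦ IsPrimary z ∧ z.norm = m

/-- The `m`-th coefficient of the Hecke `L`-series of `E₁`, the sum of the primary elements of norm
`m`. It is summed over the real parts because the imaginary parts cancel. -/
def heckeCoeff (m : ℕ) : ℤ := ∑ z ∈ primaryElts m, z.re

lemma mem_primaryElts {m : ℕ} {z : ℤ√(-3)} : z ∈ primaryElts m ↔ IsPrimary z ∧ z.norm = m := by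
  refine Finset.mem_filter.trans (and_iff_right_of_imp fun h ↦ Finset.mem_image.mpr
    ⟨(z.re, z.im), ?_, rfl⟩)
  have hnorm : z.re * z.re + 3 * (z.im * z.im) = m := by
    rw [← h.2, Zsqrtd.norm_def]
    ring
  have hle {t : ℤ} (ht : t * t ≤ m) : -(m : ℤ) ≤ t ∧ t ≤ m := by
    constructor <;> nlinarith [Int.le_self_sq t, Int.le_self_sq (-t)]
  simp only [Finset.mem_product, Finset.mem_Icc]
  exact ⟨hle (by nlinarith [mul_self_nonneg z.im]),
    hle (by nlinarith [mul_self_nonneg z.re, mul_self_nonneg z.im])⟩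

lemma isPrimary_star {z : ℤ√(-3)} (hz : IsPrimary z) : IsPrimary (star z) := by
  obtain ⟨hre, hsum⟩ := hz
  constructor
  · simpa using hre
  · simp only [Zsqrtd.re_star, Zsqrtd.im_star]
    omega

lemma sum_im_primaryElts (m : ℕ) : ∑ z ∈ primaryElts m, z.im = 0 := by
  have hstar (z) (hz : z ∈ primaryElts m) : star z ∈ primaryElts m := by
    rw [mem_primaryElts] at hz ⊢
    exact ⟨isPrimary_star hz.1, (Zsqrtd.norm_conj z).trans hz.2⟩
  have hneg : ∑ z ∈ primaryElts m, z.im = ∑ z ∈ primaryElts m, -z.im :=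
    Finset.sum_nbij' star star hstar hstar (fun z _ ↦ star_star z) (fun z _ ↦ star_star z)
      fun z _ ↦ by rw [Zsqrtd.im_star, neg_neg]
  rw [Finset.sum_neg_distrib] at hneg
  omega

end PrimaryElements

section RayParametrization

/-- The primary element `1 + 2 √-3 (m + n τ)`, written in the basis `1, √-3`. -/
def primaryElt (k : ℤ × ℤ) : ℤ√(-3) := ⟨1 - 3 * k.2, 2 * k.1 - k.2⟩

lemma primaryElt_injective : Function.Injective primaryElt := fun k k' h ↦ by
  have hre := congrArg Zsqrtd.re h
  have him := congrArg Zsqrtd.im h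
  simp only [primaryElt] at hre him
  ext <;> omega

lemma range_primaryElt : Set.range primaryElt = {z | IsPrimary z} := by
  ext z
  constructor
  · rintro ⟨k, rfl⟩
    constructor <;> simp only [primaryElt] <;> omega
  · rintro ⟨hre, hsum⟩
    refine ⟨((z.im + (1 - z.re) / 3) / 2, (1 - z.re) / 3), ?_⟩
    ext <;> simp only [primaryElt] <;> omega

lemma conj_conductorElt_add_one (k : ℤ × ℤ) :
    conj (conductorElt k + 1) = (primaryElt k).re - sqrtm3 * (primaryElt k).im := by
  apply Complex.ext <;>
    simp [conductorElt_re, conductorElt_im, primaryElt, sqrtm3, sub_eq_add_neg, add_comm]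

lemma normSq_conductorElt_add_one (k : ℤ × ℤ) :
    normSq (conductorElt k + 1) = ((primaryElt k).norm.natAbs : ℝ) := by
  have h := normSq_conductorElt_add k 1
  rw [Int.cast_one] at h
  rw [h, Nat.cast_natAbs, Zsqrtd.abs_norm (by norm_num), Zsqrtd.norm_def, primaryElt]
  congr 1
  ring

lemma tsum_conj_conductorElt_add_one (m : ℕ) :
    ∑' k : (fun k ↦ (primaryElt k).norm.natAbs) ⁻¹' {m}, conj (conductorElt k + 1) =
      heckeCoeff m := by
  have hfiber : (fun k ↦ (primaryElt k).norm.natAbs) ⁻¹' {m} =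
      primaryElt ⁻¹' (primaryElts m : Set (ℤ√(-3))) := by
    ext k
    have hk : IsPrimary (primaryElt k) := range_primaryElt.subset ⟨k, rfl⟩
    have hnorm := Zsqrtd.norm_nonneg (d := -3) (by norm_num) (primaryElt k)
    simp only [Set.mem_preimage, Set.mem_singleton_iff, Finset.mem_coe, mem_primaryElts, hk,
      true_and]
    omega
  have hrange : (primaryElts m : Set (ℤ√(-3))) ⊆ Set.range primaryElt := fun z hz ↦
    range_primaryElt ▸ (mem_primaryElts.mp hz).1
  let f (z : ℤ√(-3)) : ℂ := z.re - sqrtm3 * z.im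
  calc _ = ∑' k : primaryElt ⁻¹' (primaryElts m : Set (ℤ√(-3))), f (primaryElt k) := by
        rw [hfiber]
        exact tsum_congr fun k ↦ conj_conductorElt_add_one k
    _ = ∑' z : primaryElt '' (primaryElt ⁻¹' (primaryElts m : Set (ℤ√(-3)))), f z :=
        (tsum_image f primaryElt_injective.injOn).symm
    _ = ∑ z ∈ primaryElts m, f z := by
        rw [Set.image_preimage_eq_of_subset hrange]
        exact Finset.tsum_subtype _ f
    _ = heckeCoeff m := by
        have him : ∑ z ∈ primaryElts m, (z.im : ℂ) = 0 := by
          exact_mod_cast sum_im_primaryElts m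
        rw [Finset.sum_sub_distrib, ← Finset.mul_sum, him, mul_zero, sub_zero, heckeCoeff,
          Int.cast_sum]

end RayParametrization

section HeckeSeries

variable {s : ℂ} (hs : 3 / 2 < s.re)
include hs

lemma summable_heckeTerm : Summable fun k ↦ heckeTerm s (conductorElt k + 1) := by
  refine .of_norm ((summable_norm_conductorElt_add_one_rpow
    (r := 1 - 2 * s.re) (by linarith)).congr fun k ↦ (norm_heckeTerm s ?_).symm)
  simpa using conductorElt_add_ne_zero k (x := 1) (by decide)

lemma tsum_heckeCoeff_div_cpow :
    ∑' m : ℕ, (heckeCoeff m : ℂ) / (m : ℂ) ^ s = ∑' k, heckeTerm s (conductorElt k + 1) := by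
  have hfiber := (summable_heckeTerm hs).hasSum.tsum_fiberwise
    fun k ↦ (primaryElt k).norm.natAbs
  rw [← hfiber.tsum_eq]
  refine tsum_congr fun m ↦ ?_
  rw [← tsum_conj_conductorElt_add_one, div_eq_mul_inv, ← cpow_neg, ← tsum_mul_right]
  refine tsum_congr fun k ↦ ?_
  rw [heckeTerm, normSq_conductorElt_add_one, show (primaryElt k).norm.natAbs = m from k.2,
    ofReal_natCast]

lemma tsum_symmHeckeTerm :
    ∑' k, symmHeckeTerm s (conductorElt k) = 12 * ∑' k, heckeTerm s (conductorElt k + 1) := by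
  have hone := (summable_heckeTerm hs).hasSum
  have hneg {x A : ℂ} (h : HasSum (fun k ↦ heckeTerm s (conductorElt k + x)) A) :
      HasSum (fun k ↦ heckeTerm s (conductorElt k - x)) (-A) :=
    ((Equiv.neg (ℤ × ℤ)).hasSum_iff.mpr h).neg.congr_fun fun k ↦ by
      rw [Function.comp_apply, Equiv.neg_apply, conductorElt_neg, ← heckeTerm_neg, neg_add,
        neg_neg, sub_eq_add_neg]
  have hseven : HasSum (fun k ↦ heckeTerm s (conductorElt k + 7))
      (∑' k, heckeTerm s (conductorElt k + 1)) :=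
    ((Equiv.addRight ((-1, -2) : ℤ × ℤ)).hasSum_iff.mpr hone).congr_fun fun k ↦ by
      rw [Function.comp_apply, Equiv.coe_addRight, ← conductorElt_add_six, add_assoc]
      norm_num
  have hsymm := ((hone.sub (hneg hone)).mul_left 7).sub (hseven.sub (hneg hseven))
  exact hsymm.tsum_eq.trans (by ring)

end HeckeSeries

section AnalyticContinuation

open Filter Topology

lemma apply_one_of_eq_tsum_heckeCoeff {ω : ℝ} (hω : 0 < ω) (hg₃ : (hexPair ω hω).g₃ = 1)
    {L : ℂ → ℂ} (hL : DifferentiableOn ℂ L {s | 1 / 2 < s.re})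
    (hser : ∀ s : ℂ, 3 / 2 < s.re → L s = ∑' m : ℕ, (heckeCoeff m : ℂ) / (m : ℂ) ^ s) :
    L 1 = cbrt4 / (4 * (√3 : ℂ)) * ω := by
  have hopen (x : ℝ) : IsOpen {s : ℂ | x < s.re} := isOpen_lt continuous_const continuous_re
  have hev : (fun s ↦ 12 * L s) =ᶠ[𝓝 2] fun s ↦ ∑' k, symmHeckeTerm s (conductorElt k) := by
    filter_upwards [(hopen (3 / 2)).mem_nhds (show (2 : ℂ) ∈ _ by norm_num)] with s hs
    rw [hser s hs, tsum_heckeCoeff_div_cpow hs, tsum_symmHeckeTerm hs]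
  have heq := ((hL.const_mul 12).analyticOnNhd (hopen _)).eqOn_of_preconnected_of_eventuallyEq
    (differentiableOn_tsum_symmHeckeTerm.analyticOnNhd (hopen _))
    (convex_halfSpace_re_gt _).isPreconnected (show (2 : ℂ) ∈ _ by norm_num) hev
  have hone : 12 * L 1 = ∑' k, symmHeckeTerm 1 (conductorElt k) :=
    heq (show (1 : ℂ) ∈ _ by norm_num)
  rw [(hasSum_symmHeckeTerm_one hω hg₃).tsum_eq] at hone
  exact mul_left_cancel₀ (by norm_num) hone

end AnalyticContinuation

section PrimaryMultiples

lemma heckeCoeff_one : heckeCoeff 1 = 1 := by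
  have h : primaryElts 1 = {1} := by decide
  rw [heckeCoeff, h, Finset.sum_singleton, Zsqrtd.re_one]

lemma isPrimary_mul_iff {u z : ℤ√(-3)} (hu : IsPrimary u) : IsPrimary (u * z) ↔ IsPrimary z := by
  obtain ⟨a, ha⟩ : ∃ a, u.re = 3 * a + 1 := ⟨u.re / 3, by have := hu.1; omega⟩
  obtain ⟨b, hb⟩ : ∃ b, u.re = 2 * b + 1 - u.im := ⟨(u.re + u.im) / 2, by have := hu.2; omega⟩
  have hthree : (u * z).re = z.re + 3 * (a * z.re - u.im * z.im) := by
    rw [Zsqrtd.re_mul, ha]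
    ring
  have htwo : (u * z).re + (u * z).im =
      z.re + z.im + 2 * (b * (z.re + z.im) - 2 * u.im * z.im) := by
    rw [Zsqrtd.re_mul, Zsqrtd.im_mul, hb]
    ring
  rw [IsPrimary, IsPrimary, htwo, hthree]
  omega

variable {q n : ℕ} {u : ℤ√(-3)}

lemma mul_mem_primaryElts_iff (hq : q ≠ 0) (hu : IsPrimary u) (hnorm : u.norm = q) {z : ℤ√(-3)} :
    u * z ∈ primaryElts (q * n) ↔ z ∈ primaryElts n := by
  rw [mem_primaryElts, mem_primaryElts, isPrimary_mul_iff hu, Zsqrtd.norm_mul, hnorm, Nat.cast_mul,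
    mul_right_inj' (Nat.cast_ne_zero.mpr hq)]

lemma zsqrtd_mul_right_injective (hu : u.norm ≠ 0) : Function.Injective (u * ·) := fun z w h ↦ by
  have hsmul : (u.norm : ℤ√(-3)) * z = u.norm * w := by
    rw [Zsqrtd.norm_eq_mul_conj, mul_comm u, mul_assoc, mul_assoc]
    exact congrArg (star u * ·) h
  exact Zsqrtd.eq_of_smul_eq_smul_left hu hsmul

lemma sum_re_primaryElts_filter_dvd [DecidablePred (u ∣ ·)] (hq : q ≠ 0) (hu : IsPrimary u)
    (hnorm : u.norm = q) :
    ∑ z ∈ primaryElts (q * n) with u ∣ z, z.re = u.re * heckeCoeff n := by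
  have hne : u.norm ≠ 0 := hnorm ▸ Nat.cast_ne_zero.mpr hq
  have himage : {z ∈ primaryElts (q * n) | u ∣ z} = (primaryElts n).image (u * ·) := by
    ext z
    simp only [Finset.mem_filter, Finset.mem_image]
    constructor
    · rintro ⟨hz, w, rfl⟩
      exact ⟨w, (mul_mem_primaryElts_iff hq hu hnorm).mp hz, rfl⟩
    · rintro ⟨w, hw, rfl⟩
      exact ⟨(mul_mem_primaryElts_iff hq hu hnorm).mpr hw, dvd_mul_right u w⟩
  rw [himage, Finset.sum_image (zsqrtd_mul_right_injective hne).injOn]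
  simp only [Zsqrtd.re_mul, Finset.sum_add_distrib, ← Finset.mul_sum, sum_im_primaryElts, mul_zero,
    add_zero, heckeCoeff]

end PrimaryMultiples

section HeckeRelations

/-- The relations `f (p n) = c f n - p f (n / p)` satisfied at a prime `p` by the coefficients of a
Dirichlet series whose Euler factor at `p` is `1 / (1 - c p⁻ˢ + p¹⁻²ˢ)`. -/
def HeckeRelationAt (f : ℕ → ℤ) (p : ℕ) (c : ℤ) : Prop :=
  (∀ n, ¬ p ∣ n → f (p * n) = c * f n) ∧
    ∀ n, n ≠ 0 → f (p * (p * n)) = c * f (p * n) - p * f n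

variable {p : ℕ} (hp : p.Prime)
include hp

lemma heckeRelationAt_of_multiplicative {a : ℕ → ℤ}
    (hmul : ∀ m k : ℕ, m.Coprime k → a (m * k) = a m * a k)
    (hrec : ∀ j, a (p ^ (j + 2)) = a p * a (p ^ (j + 1)) - p * a (p ^ j)) :
    HeckeRelationAt a p (a p) := by
  refine ⟨fun n hn ↦ hmul p n ((hp.coprime_iff_not_dvd).mpr hn), fun n hn ↦ ?_⟩
  obtain ⟨j, m, hm, rfl⟩ := Nat.exists_eq_pow_mul_and_not_dvd hn p hp.ne_one
  have hpow (i : ℕ) : a (p ^ i * m) = a (p ^ i) * a m :=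
    hmul _ m (((hp.coprime_iff_not_dvd).mpr hm).pow_left i)
  rw [show p * (p * (p ^ j * m)) = p ^ (j + 2) * m by ring,
    show p * (p ^ j * m) = p ^ (j + 1) * m by ring, hpow, hpow, hpow, hrec]
  ring

lemma apply_prime_mul_eq_zero {a : ℕ → ℤ}
    (hmul : ∀ m k : ℕ, m.Coprime k → a (m * k) = a m * a k)
    (hzero : ∀ j, 1 ≤ j → a (p ^ j) = 0) {n : ℕ} (hn : n ≠ 0) : a (p * n) = 0 := by
  obtain ⟨j, m, hm, rfl⟩ := Nat.exists_eq_pow_mul_and_not_dvd hn p hp.ne_one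
  rw [← mul_assoc, ← pow_succ', hmul _ m (((hp.coprime_iff_not_dvd).mpr hm).pow_left _),
    hzero _ (Nat.le_add_left 1 j), zero_mul]

omit hp in
lemma eqOn_of_heckeRelationAt {f g : ℕ → ℤ} (hone : f 1 = g 1)
    (hprime : ∀ p : ℕ, p.Prime → (∀ n, n ≠ 0 → f (p * n) = g (p * n)) ∨
      ∃ c, HeckeRelationAt f p c ∧ HeckeRelationAt g p c) : Set.EqOn f g {0}ᶜ := by
  intro n
  induction n using Nat.strong_induction_on with | _ n ih
  intro hn
  obtain rfl | hn₁ := eq_or_ne n 1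
  · exact hone
  obtain ⟨p, hp, m, rfl⟩ := Nat.exists_prime_and_dvd hn₁
  have hm : m ≠ 0 := right_ne_zero_of_mul hn
  have hlt : m < p * m := lt_mul_left hm.bot_lt hp.one_lt
  obtain heq | ⟨c, hf, hg⟩ := hprime p hp
  · exact heq m hm
  by_cases hdvd : p ∣ m
  · obtain ⟨k, rfl⟩ := hdvd
    have hk : k ≠ 0 := right_ne_zero_of_mul hm
    rw [hf.2 k hk, hg.2 k hk, ih _ hlt hm,
      ih k ((lt_mul_left hk.bot_lt hp.one_lt).trans hlt) hk]
  · rw [hf.1 m hdvd, hg.1 m hdvd, ih m hlt hm]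

end HeckeRelations

section HeckeCoefficients

lemma isPrimary_norm {z : ℤ√(-3)} (hz : IsPrimary z) : IsPrimary (z.norm : ℤ√(-3)) := by
  rw [Zsqrtd.norm_eq_mul_conj]
  exact (isPrimary_mul_iff hz).mpr (isPrimary_star hz)

variable {p : ℕ} (hp : p.Prime)
include hp

lemma heckeCoeff_mul_eq_zero_of_dvd_six (hp6 : p ∣ 6) (n : ℕ) : heckeCoeff (p * n) = 0 := by
  rw [heckeCoeff, Finset.sum_eq_zero]
  intro z hz
  obtain ⟨hz, hnorm⟩ := mem_primaryElts.mp hz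
  obtain ⟨hthree, htwo⟩ := isPrimary_norm hz
  rw [hnorm, Zsqrtd.re_intCast] at hthree htwo
  rw [Zsqrtd.im_intCast] at htwo
  have htwo_or_three : p = 2 ∨ p = 3 := by
    have hmem : p ∈ Nat.primeFactors 6 := Nat.mem_primeFactors.mpr ⟨hp, hp6, by norm_num⟩
    simpa [show Nat.primeFactors 6 = {2, 3} by decide +kernel] using hmem
  rcases htwo_or_three with rfl | rfl <;> omega

lemma dvd_of_natCast_dvd {n : ℕ} {z : ℤ√(-3)} (hz : z ∈ primaryElts (p * n))
    (hdvd : (p : ℤ√(-3)) ∣ z) : p ∣ n := by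
  obtain ⟨w, rfl⟩ := hdvd
  have h := (mem_primaryElts.mp hz).2
  rw [Zsqrtd.norm_mul, Zsqrtd.norm_natCast, Nat.cast_mul, mul_assoc,
    mul_right_inj' (Nat.cast_ne_zero.mpr hp.ne_zero)] at h
  exact Int.natCast_dvd_natCast.mp ⟨_, h.symm⟩

lemma sum_re_primaryElts_filter_natCast_dvd_of_not_dvd [DecidablePred ((p : ℤ√(-3)) ∣ ·)] {n : ℕ}
    (hn : ¬ p ∣ n) : ∑ z ∈ primaryElts (p * n) with (p : ℤ√(-3)) ∣ z, z.re = 0 := by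
  rw [Finset.filter_false_of_mem fun z hz hdvd ↦ hn (dvd_of_natCast_dvd hp hz hdvd),
    Finset.sum_empty]

lemma heckeRelationAt_heckeCoeff_of_inert (hmod : p % 6 = 5)
    (hdvd : ∀ z : ℤ√(-3), (p : ℤ) ∣ z.norm → (p : ℤ√(-3)) ∣ z) :
    HeckeRelationAt heckeCoeff p 0 := by
  classical
  have hall (n : ℕ) :
      heckeCoeff (p * n) = ∑ z ∈ primaryElts (p * n) with (p : ℤ√(-3)) ∣ z, z.re := by
    rw [Finset.filter_true_of_mem, heckeCoeff]
    intro z hz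
    exact hdvd z ⟨n, by rw [(mem_primaryElts.mp hz).2, Nat.cast_mul]⟩
  have hprimary : IsPrimary (-(p : ℤ√(-3))) := by
    rw [IsPrimary, Zsqrtd.re_neg, Zsqrtd.im_neg, Zsqrtd.re_natCast, Zsqrtd.im_natCast]
    omega
  refine ⟨fun n hn ↦ ?_, fun n _ ↦ ?_⟩
  · rw [hall, sum_re_primaryElts_filter_natCast_dvd_of_not_dvd hp hn, zero_mul]
  · have hsum := sum_re_primaryElts_filter_dvd (n := n) (mul_ne_zero hp.ne_zero hp.ne_zero)
      hprimary (by rw [Zsqrtd.norm_neg, Zsqrtd.norm_natCast, Nat.cast_mul])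
    simp only [neg_dvd, Zsqrtd.re_neg, Zsqrtd.re_natCast, mul_assoc p] at hsum
    rw [hall, hsum]
    ring

end HeckeCoefficients

section SplitPrimes

variable {p : ℕ} (hp : p.Prime) {ϖ z : ℤ√(-3)} (hnorm : ϖ.norm = p)
include hp hnorm

lemma dvd_of_dvd_im_star_mul (hz : (p : ℤ) ∣ z.norm) (him : (p : ℤ) ∣ (star ϖ * z).im) : ϖ ∣ z := by
  have hprime : Prime (p : ℤ) := Nat.prime_iff_prime_int.mp hp
  have hre : (p : ℤ) ∣ (star ϖ * z).re := by
    refine hprime.dvd_of_dvd_pow (n := 2) ?_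
    have hdvd : (p : ℤ) ∣ (star ϖ * z).norm - 3 * (star ϖ * z).im * (star ϖ * z).im :=
      dvd_sub (by rw [Zsqrtd.norm_mul]; exact dvd_mul_of_dvd_right hz _) (him.mul_left _)
    rw [Zsqrtd.norm_def] at hdvd
    convert! hdvd using 1
    ring
  obtain ⟨w, hw⟩ := (Zsqrtd.intCast_dvd _ _).mpr ⟨hre, him⟩
  have hstar : (star ϖ).norm ≠ 0 := by
    rw [Zsqrtd.norm_conj, hnorm]
    exact hprime.ne_zero
  refine ⟨w, zsqrtd_mul_right_injective hstar ?_⟩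
  change star ϖ * z = star ϖ * (ϖ * w)
  rw [hw, ← hnorm, Zsqrtd.norm_eq_mul_conj]
  ring

lemma dvd_or_star_dvd_of_dvd_norm (hz : (p : ℤ) ∣ z.norm) : ϖ ∣ z ∨ star ϖ ∣ z := by
  have him : (p : ℤ) ∣ (star ϖ * z).im * (star (star ϖ) * z).im := by
    have heq : (star ϖ * z).im * (star (star ϖ) * z).im =
        p * z.im ^ 2 - z.norm * ϖ.im ^ 2 := by
      rw [← hnorm, Zsqrtd.norm_def, Zsqrtd.norm_def, star_star]
      simp only [Zsqrtd.im_mul, Zsqrtd.re_star, Zsqrtd.im_star]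
      ring
    rw [heq]
    exact dvd_sub (dvd_mul_right _ _) (hz.mul_right _)
  exact ((Nat.prime_iff_prime_int.mp hp).dvd_or_dvd him).imp
    (dvd_of_dvd_im_star_mul hp hnorm hz)
    (dvd_of_dvd_im_star_mul hp ((Zsqrtd.norm_conj ϖ).trans hnorm) hz)

lemma not_dvd_two_mul_re (hϖ : IsPrimary ϖ) : ¬ (p : ℤ) ∣ 2 * ϖ.re := by
  have hodd := (isPrimary_norm hϖ).2
  rw [hnorm, Zsqrtd.re_intCast, Zsqrtd.im_intCast] at hodd
  intro hdvd
  obtain htwo | hre := (Nat.prime_iff_prime_int.mp hp).dvd_or_dvd hdvd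
  · have := Int.le_of_dvd two_pos htwo
    have := hp.two_le
    omega
  · have hlt : ϖ.re ^ 2 < (p : ℤ) ^ 2 := by
      have := hp.one_lt
      rw [Zsqrtd.norm_def] at hnorm
      nlinarith [mul_self_nonneg ϖ.im]
    have hzero := Int.eq_zero_of_abs_lt_dvd hre (abs_lt_of_sq_lt_sq hlt (Nat.cast_nonneg p))
    have := hϖ.1
    omega

lemma natCast_dvd_iff_dvd_and_star_dvd (hϖ : IsPrimary ϖ) :
    (p : ℤ√(-3)) ∣ z ↔ ϖ ∣ z ∧ star ϖ ∣ z := by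
  have hmul : (p : ℤ√(-3)) = ϖ * star ϖ := by
    rw [← Zsqrtd.norm_eq_mul_conj, hnorm, Int.cast_natCast]
  refine ⟨fun h ↦ ⟨(Dvd.intro _ hmul.symm).trans h, (Dvd.intro_left _ hmul.symm).trans h⟩, ?_⟩
  rintro ⟨⟨v, hv⟩, ⟨w, hw⟩⟩
  have htrace : ((2 * ϖ.re : ℤ) : ℤ√(-3)) = ϖ + star ϖ := by
    ext <;> simp [two_mul]
  have hdvd : ((p : ℤ) : ℤ√(-3)) ∣ (2 * ϖ.re : ℤ) * z := by
    refine ⟨w + v, ?_⟩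
    rw [htrace, Int.cast_natCast, hmul]
    linear_combination ϖ * hw + star ϖ * hv
  rw [Zsqrtd.intCast_dvd, Zsqrtd.re_smul, Zsqrtd.im_smul] at hdvd
  have hcancel {t : ℤ} (h : (p : ℤ) ∣ 2 * ϖ.re * t) : (p : ℤ) ∣ t :=
    ((Nat.prime_iff_prime_int.mp hp).dvd_or_dvd h).resolve_left (not_dvd_two_mul_re hp hnorm hϖ)
  exact (Zsqrtd.intCast_dvd (p : ℤ) z).mpr ⟨hcancel hdvd.1, hcancel hdvd.2⟩

lemma heckeCoeff_mul_add_sum_re_filter_dvd [DecidablePred ((p : ℤ√(-3)) ∣ ·)] (hϖ : IsPrimary ϖ)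
    (n : ℕ) : heckeCoeff (p * n) + ∑ z ∈ primaryElts (p * n) with (p : ℤ√(-3)) ∣ z, z.re =
      2 * ϖ.re * heckeCoeff n := by
  classical
  have hor : {z ∈ primaryElts (p * n) | ϖ ∣ z ∨ star ϖ ∣ z} = primaryElts (p * n) :=
    Finset.filter_true_of_mem fun z hz ↦ dvd_or_star_dvd_of_dvd_norm hp hnorm
      ⟨n, by rw [(mem_primaryElts.mp hz).2, Nat.cast_mul]⟩
  have hsum := Finset.sum_union_inter (s₁ := {z ∈ primaryElts (p * n) | ϖ ∣ z})
    (s₂ := {z ∈ primaryElts (p * n) | star ϖ ∣ z}) (f := Zsqrtd.re)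
  rw [← Finset.filter_or, ← Finset.filter_and, hor,
    sum_re_primaryElts_filter_dvd hp.ne_zero hϖ hnorm,
    sum_re_primaryElts_filter_dvd hp.ne_zero (isPrimary_star hϖ)
      ((Zsqrtd.norm_conj ϖ).trans hnorm), Zsqrtd.re_star] at hsum
  simp only [natCast_dvd_iff_dvd_and_star_dvd hp hnorm hϖ, heckeCoeff] at hsum ⊢
  linarith

lemma heckeRelationAt_heckeCoeff_of_split (hϖ : IsPrimary ϖ) :
    HeckeRelationAt heckeCoeff p (2 * ϖ.re) := by
  classical
  have hsum := heckeCoeff_mul_add_sum_re_filter_dvd hp hnorm hϖ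
  refine ⟨fun n hn ↦ ?_, fun n _ ↦ ?_⟩
  · rw [← hsum n, sum_re_primaryElts_filter_natCast_dvd_of_not_dvd hp hn, add_zero]
  · have hprimary : IsPrimary (p : ℤ√(-3)) := by
      have h := isPrimary_norm hϖ
      rwa [hnorm, Int.cast_natCast] at h
    have hdvd := sum_re_primaryElts_filter_dvd (n := n) (mul_ne_zero hp.ne_zero hp.ne_zero)
      hprimary (by rw [Zsqrtd.norm_natCast, Nat.cast_mul])
    rw [mul_assoc, Zsqrtd.re_natCast] at hdvd
    rw [← hsum (p * n), hdvd, add_sub_cancel_right]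

end SplitPrimes

section CharacterSums

variable {F R : Type*} [Field F] [CommRing R]

lemma mulChar_apply_eq_one_iff [Finite F] (χ : MulChar F R) {u : F} (hu : u ≠ 0) :
    χ u = 1 ↔ ∃ v, v ^ orderOf χ = u := by
  constructor
  · intro h
    obtain ⟨g, hg⟩ := IsCyclic.exists_generator (α := Fˣ)
    obtain ⟨k, hk⟩ := mem_powers_iff_mem_zpowers.mpr (hg (Units.mk0 u hu))
    replace hk : (g : F) ^ k = u := by simpa using congrArg Units.val hk
    have hχ : χ ^ k = 1 := by
      rw [MulChar.eq_iff hg, MulChar.pow_apply_coe, MulChar.one_apply_coe, ← map_pow, hk, h]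
    obtain ⟨l, rfl⟩ := orderOf_dvd_of_pow_eq_one hχ
    exact ⟨(g : F) ^ l, by rw [← pow_mul, mul_comm, hk]⟩
  · rintro ⟨v, rfl⟩
    have hv : v ≠ 0 := fun hzero ↦ hu (by rw [hzero, zero_pow χ.orderOf_pos.ne'])
    rw [map_pow, ← MulChar.pow_apply' χ χ.orderOf_pos.ne', pow_orderOf_eq_one,
      MulChar.one_apply hv.isUnit]

variable [Fintype F]

lemma quadraticChar_card_curve [DecidableEq F] (hF : ringChar F ≠ 2) (f : F → F) :
    (Nat.card {xy : F × F // xy.2 ^ 2 = f xy.1} : ℤ) =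
      Fintype.card F + ∑ x, quadraticChar F (f x) := by
  have hfiber (x : F) : (Nat.card {y // y ^ 2 = f x} : ℤ) = 1 + quadraticChar F (f x) := by
    have h := quadraticChar_card_sqrts hF (f x)
    rw [Set.toFinset_card, ← Nat.card_eq_fintype_card] at h
    rw [add_comm, ← h]
    rfl
  have hsigma : Nat.card {xy : F × F // xy.2 ^ 2 = f xy.1} =
      Nat.card (Σ x, {y // y ^ 2 = f x}) :=
    Nat.card_congr (Equiv.subtypeProdEquivSigmaSubtype fun x y ↦ y ^ 2 = f x)
  rw [hsigma, Nat.card_sigma, Nat.cast_sum]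
  simp only [hfiber, Finset.sum_add_distrib, Finset.sum_const, Finset.card_univ, nsmul_eq_mul,
    mul_one]

lemma pow_bijective_of_coprime {n : ℕ} (hn : (Fintype.card F - 1).Coprime n) (hn₀ : n ≠ 0) :
    Function.Bijective fun x : F ↦ x ^ n := by
  refine Finite.injective_iff_bijective.mp fun x y h ↦ ?_
  obtain rfl | hy := eq_or_ne y 0
  · exact eq_zero_of_pow_eq_zero (h.trans (zero_pow hn₀))
  have hone : (x / y) ^ n = 1 := by
    rw [div_pow]
    exact (div_eq_one_iff_eq (pow_ne_zero n hy)).mpr h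
  have hx : x / y ≠ 0 := fun hzero ↦ by simp [hzero, hn₀] at hone
  have hord : orderOf (x / y) ∣ 1 := by
    rw [← hn.gcd_eq_one]
    exact Nat.dvd_gcd (orderOf_dvd_of_pow_eq_one (FiniteField.pow_card_sub_one_eq_one _ hx))
      (orderOf_dvd_of_pow_eq_one hone)
  exact eq_of_div_eq_one (orderOf_eq_one_iff.mp (Nat.dvd_one.mp hord))

lemma exists_isPrimitiveRoot_of_dvd_card_sub_one {n : ℕ} (hn : n ∣ Fintype.card F - 1) :
    ∃ ζ : F, IsPrimitiveRoot ζ n := by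
  classical
  obtain ⟨g, hg⟩ := IsCyclic.exists_generator (α := Fˣ)
  have hord : orderOf (g : F) = Fintype.card F - 1 := by
    rw [orderOf_units, orderOf_eq_card_of_forall_mem_zpowers hg, Nat.card_eq_fintype_card,
      Fintype.card_units]
  obtain ⟨m, hm⟩ := hn
  refine ⟨(g : F) ^ m, (IsPrimitiveRoot.orderOf (g : F)).pow ?_ (by rw [hord, hm, mul_comm])⟩
  exact hord ▸ Nat.sub_pos_of_lt Fintype.one_lt_card

lemma card_pow_eq [DecidableEq F] {n : ℕ} (hn : n ∣ Fintype.card F - 1) {u : F} (hu : u ≠ 0)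
    [Decidable (∃ v, v ^ n = u)] :
    Finset.card {x : F | x ^ n = u} = if ∃ v, v ^ n = u then n else 0 := by
  obtain ⟨ζ, hζ⟩ := exists_isPrimitiveRoot_of_dvd_card_sub_one hn
  have hn₀ : 0 < n := Nat.pos_of_dvd_of_pos hn (Nat.sub_pos_of_lt Fintype.one_lt_card)
  have hroots : ({x | x ^ n = u} : Finset F) = (Polynomial.nthRoots n u).toFinset := by
    ext x
    rw [Finset.mem_filter_univ, Multiset.mem_toFinset, Polynomial.mem_nthRoots hn₀]
  rw [hroots, Multiset.toFinset_card_of_nodup (hζ.nthRoots_nodup hu), hζ.card_nthRoots]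
  congr

variable [IsDomain R]

lemma card_pow_eq_sum_mulChar [DecidableEq F] (χ : MulChar F R) {u : F} (hu : u ≠ 0) :
    (Finset.card {x : F | x ^ orderOf χ = u} : R) = ∑ i ∈ Finset.range (orderOf χ), (χ ^ i) u := by
  have hpow (i : ℕ) : (χ ^ i) u = χ u ^ i := MulChar.pow_apply_coe χ i (Units.mk0 u hu)
  simp only [card_pow_eq χ.orderOf_dvd_card_sub_one hu, hpow]
  split_ifs with h <;> rw [← mulChar_apply_eq_one_iff χ hu] at h
  · simp only [h, one_pow, Finset.sum_const, Finset.card_range, nsmul_one]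
  · have hgeom := geom_sum_mul (χ u) (orderOf χ)
    rw [← hpow, pow_orderOf_eq_one, MulChar.one_apply hu.isUnit, sub_self] at hgeom
    rw [Nat.cast_zero, (mul_eq_zero.mp hgeom).resolve_right (sub_ne_zero.mpr h)]

lemma sum_mulChar_one_sub_pow (χ φ : MulChar F R) :
    ∑ x, φ (1 - x ^ orderOf χ) = 1 + ∑ i ∈ Finset.range (orderOf χ), jacobiSum (χ ^ i) φ := by
  classical
  have hzero : ({x | x ^ orderOf χ = 0} : Finset F) = {0} := by
    ext x
    simp only [Finset.mem_filter_univ, Finset.mem_singleton,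
      pow_eq_zero_iff χ.orderOf_pos.ne']
  have hchar (u : F) : (Finset.card {x : F | x ^ orderOf χ = u} : R) * φ (1 - u) =
      (if u = 0 then 1 else 0) +
        ∑ i ∈ Finset.range (orderOf χ), (χ ^ i) u * φ (1 - u) := by
    split_ifs with hu
    · simp only [hu, hzero, Finset.card_singleton, MulChar.map_zero, sub_zero, map_one,
        Finset.sum_const_zero, Nat.cast_one, mul_one, add_zero]
    · rw [card_pow_eq_sum_mulChar χ hu, Finset.sum_mul, zero_add]
  rw [← Finset.sum_fiberwise' Finset.univ (· ^ orderOf χ) fun u ↦ φ (1 - u)]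
  simp only [Finset.sum_const, nsmul_eq_mul, hchar, Finset.sum_add_distrib, jacobiSum,
    Finset.sum_ite_eq', Finset.mem_univ, if_true]
  rw [Finset.sum_comm]

lemma jacobiSum_add_card {χ φ : MulChar F R} (hχ : χ ≠ 1) (hφ : φ ≠ 1) :
    jacobiSum χ φ + Fintype.card F = ∑ u, (χ u - 1) * (φ (1 - u) - 1) := by
  have hsub : ∑ u, φ (1 - u) = ∑ u, φ u := (Equiv.subLeft 1).sum_comp φ
  simp only [sub_mul, mul_sub, Finset.sum_sub_distrib, mul_one, one_mul, hsub,
    MulChar.sum_eq_zero_of_ne_one hχ, MulChar.sum_eq_zero_of_ne_one hφ, Finset.sum_const,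
    Finset.card_univ, nsmul_one, jacobiSum]
  ring

end CharacterSums

section ComplexJacobiSums

variable {F : Type*} [Field F] [Fintype F] {χ φ : MulChar F ℂ}

lemma conj_jacobiSum (χ φ : MulChar F ℂ) : conj (jacobiSum χ φ) = jacobiSum χ⁻¹ φ⁻¹ := by
  rw [jacobiSum, map_sum]
  simp only [map_mul, ← Complex.star_def, MulChar.star_apply', jacobiSum]

lemma normSq_jacobiSum (hχ : χ ≠ 1) (hφ : φ ≠ 1) (hχφ : χ * φ ≠ 1) :
    normSq (jacobiSum χ φ) = Fintype.card F := by
  have hchar : ringChar ℂ ≠ ringChar F := by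
    rw [ringChar.eq_zero]
    exact (CharP.ringChar_ne_zero_of_finite F).symm
  exact_mod_cast (mul_conj _).symm.trans
    ((conj_jacobiSum χ φ).symm ▸ jacobiSum_mul_jacobiSum_inv hchar hχ hφ hχφ)

lemma isPrimitiveRoot_tau : IsPrimitiveRoot tau 3 :=
  IsPrimitiveRoot.iff_orderOf.mpr (orderOf_eq_prime tau_cube tau_ne_one)

variable (hχ : orderOf χ = 3) (hφ : φ.IsQuadratic)
include hχ

omit [Fintype F] in
lemma ne_one_of_orderOf_eq_three : χ ≠ 1 := by
  rintro rfl
  rw [orderOf_one] at hχ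
  norm_num at hχ

include hφ

lemma sum_quadratic_one_sub_cube (hφ₁ : φ ≠ 1) :
    ∑ x, φ (1 - x ^ 3) = ((2 * (jacobiSum χ φ).re : ℝ) : ℂ) := by
  have hsq : χ ^ 2 = χ⁻¹ := eq_inv_of_mul_eq_one_left (hχ ▸ pow_orderOf_eq_one χ : χ ^ 3 = 1)
  have hsum := sum_mulChar_one_sub_pow χ φ
  rw [hχ, Finset.sum_range_succ, Finset.sum_range_succ, Finset.sum_range_one, pow_zero, pow_one,
    jacobiSum_one_nontrivial hφ₁, hsq] at hsum
  have hconj := conj_jacobiSum χ φ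
  rw [hφ.inv] at hconj
  rw [hsum, ← hconj, ← add_conj]
  ring

omit hφ [Fintype F] in
lemma exists_apply_sub_one_eq_sqrtm3_mul [Finite F] {u : F} (hu : u ≠ 0) :
    ∃ a b : ℤ, χ u - 1 = sqrtm3 * (a + b * tau) := by
  have hχ₃ : χ ^ 3 = 1 := by rw [← hχ, pow_orderOf_eq_one]
  obtain ⟨k, hk, hval⟩ := MulChar.exists_apply_eq_pow hχ₃ isPrimitiveRoot_tau hu
  rw [hval]
  interval_cases k
  · exact ⟨0, 0, by simp⟩
  · refine ⟨1, 1, ?_⟩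
    push_cast
    linear_combination 2 * (1 + tau) * tau_eq - 2 * tau_sq
  · refine ⟨0, 1, ?_⟩
    push_cast
    linear_combination 2 * tau * tau_eq - tau_sq

omit [Fintype F] in
lemma exists_sub_one_mul_sub_one_eq_conductorElt [Finite F] (u : F) :
    ∃ k, (χ u - 1) * (φ (1 - u) - 1) = conductorElt k := by
  have hzero : conductorElt 0 = 0 := by simp [conductorElt]
  obtain rfl | hu := eq_or_ne u 0
  · exact ⟨0, by simp [hzero]⟩
  obtain hφu | hφu | hφu := hφ (1 - u)
  · have hu₁ : u = 1 := by
      by_contra hne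
      exact ((sub_ne_zero.mpr (Ne.symm hne)).isUnit.map φ).ne_zero hφu
    exact ⟨0, by simp [hu₁, hzero]⟩
  · exact ⟨0, by simp [hφu, hzero]⟩
  · obtain ⟨a, b, hab⟩ := exists_apply_sub_one_eq_sqrtm3_mul hχ hu
    refine ⟨(-a, -b), ?_⟩
    rw [hab, hφu, conductorElt]
    push_cast
    ring

lemma exists_jacobiSum_add_card_eq_conductorElt (hφ₁ : φ ≠ 1) :
    ∃ k, jacobiSum χ φ + Fintype.card F = conductorElt k := by
  choose k hk using exists_sub_one_mul_sub_one_eq_conductorElt hχ hφ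
  refine ⟨∑ u, k u, ?_⟩
  rw [jacobiSum_add_card (ne_one_of_orderOf_eq_three hχ) hφ₁]
  simp only [hk, conductorElt, Prod.fst_sum, Prod.snd_sum, Int.cast_sum, Finset.sum_mul,
    ← Finset.sum_add_distrib, Finset.mul_sum]

omit [Fintype F] in
lemma mul_ne_one_of_orderOf_eq_three : χ * φ ≠ 1 := by
  intro h
  have hχφ : χ = φ := by rw [eq_inv_of_mul_eq_one_left h, hφ.inv]
  have hdvd := orderOf_dvd_of_pow_eq_one (hχφ ▸ hφ.sq_eq_one : χ ^ 2 = 1)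
  rw [hχ] at hdvd
  norm_num at hdvd

end ComplexJacobiSums

section CurveCounts

lemma card_curve_of_bijective_cube {F : Type*} [Field F]
    (hcube : Function.Bijective fun x : F ↦ x ^ 3) :
    Nat.card {xy : F × F // xy.2 ^ 2 = xy.1 ^ 3 + 1} = Nat.card F := by
  refine Nat.card_eq_of_bijective (fun xy ↦ xy.1.2) ⟨?_, fun y ↦ ?_⟩
  · rintro ⟨⟨x, y⟩, hxy⟩ ⟨⟨x', y'⟩, hxy'⟩ rfl
    have hx : x = x' := hcube.injective (add_right_cancel (hxy.symm.trans hxy'))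
    simp only [hx]
  · obtain ⟨x, hx⟩ := hcube.surjective (y ^ 2 - 1)
    exact ⟨⟨(x, y), by rw [eq_add_of_sub_eq hx.symm]⟩, rfl⟩

lemma zsqrtd_natCast_dvd_of_dvd_norm {p : ℕ} (hp : p.Prime) (hp6 : ¬ p ∣ 6)
    (hcube : Function.Injective fun x : ZMod p ↦ x ^ 3) {z : ℤ√(-3)} (hz : (p : ℤ) ∣ z.norm) :
    (p : ℤ√(-3)) ∣ z := by
  have := Fact.mk hp
  have hnorm : (z.re : ZMod p) ^ 2 + 3 * (z.im : ZMod p) ^ 2 = 0 := by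
    rw [← ZMod.intCast_zmod_eq_zero_iff_dvd, Zsqrtd.norm_def] at hz
    push_cast at hz
    linear_combination hz
  have hcubes : (z.re - z.im : ZMod p) ^ 3 = (2 * z.im) ^ 3 := by
    linear_combination (z.re - 3 * z.im : ZMod p) * hnorm
  have hre : (z.re : ZMod p) = 3 * z.im := by
    linear_combination hcube hcubes
  have him : (z.im : ZMod p) = 0 := by
    have htwelve : ((12 : ℕ) : ZMod p) * (z.im : ZMod p) ^ 2 = 0 := by
      push_cast
      linear_combination hnorm - (z.re + 3 * z.im : ZMod p) * hre
    have hp12 : ¬ p ∣ 12 := fun h ↦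
      hp6 ((hp.dvd_mul.mp (h.trans (by norm_num : 12 ∣ 2 * 6))).elim (·.mul_right 3) id)
    exact pow_eq_zero_iff two_ne_zero |>.mp ((mul_eq_zero.mp htwelve).resolve_left
      ((ZMod.natCast_eq_zero_iff 12 p).not.mpr hp12))
  refine (Zsqrtd.intCast_dvd (p : ℤ) z).mpr ⟨?_, ?_⟩
  · rw [← ZMod.intCast_zmod_eq_zero_iff_dvd, hre, him, mul_zero]
  · rwa [← ZMod.intCast_zmod_eq_zero_iff_dvd]

variable {F : Type*} [Field F] [Fintype F]

lemma quadraticChar_ringHomComp_ne_one [DecidableEq F] (hF : ringChar F ≠ 2) :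
    (quadraticChar F).ringHomComp (Int.castRingHom ℂ) ≠ 1 :=
  (MulChar.ringHomComp_ne_one_iff (Int.castRingHom ℂ).injective_int).mpr (quadraticChar_ne_one hF)

lemma card_sub_card_curve_eq_neg_two_mul_re [DecidableEq F] (hF : ringChar F ≠ 2)
    {χ : MulChar F ℂ} (hχ : orderOf χ = 3) :
    (Fintype.card F : ℝ) - Nat.card {xy : F × F // xy.2 ^ 2 = xy.1 ^ 3 + 1} =
      -2 * (jacobiSum χ ((quadraticChar F).ringHomComp (Int.castRingHom ℂ))).re := by
  have hcurve := quadraticChar_card_curve hF fun x ↦ x ^ 3 + 1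
  have hneg : ∑ x : F, quadraticChar F (x ^ 3 + 1) = ∑ x : F, quadraticChar F (1 - x ^ 3) := by
    rw [← Equiv.sum_comp (Equiv.neg F)]
    refine Finset.sum_congr rfl fun x _ ↦ ?_
    rw [Equiv.neg_apply, Odd.neg_pow (by decide), neg_add_eq_sub]
  have hjacobi := sum_quadratic_one_sub_cube hχ ((quadraticChar_isQuadratic F).comp _)
    (quadraticChar_ringHomComp_ne_one hF)
  simp only [MulChar.ringHomComp_apply, ← map_sum, ← hneg] at hjacobi
  rw [eq_intCast, ← ofReal_intCast, ofReal_inj] at hjacobi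
  have hcast : (Nat.card {xy : F × F // xy.2 ^ 2 = xy.1 ^ 3 + 1} : ℝ) =
      Fintype.card F + (∑ x, quadraticChar F (x ^ 3 + 1) : ℤ) := by
    exact_mod_cast hcurve
  rw [hcast, hjacobi]
  ring

lemma exists_isPrimary_norm_eq_card (hF₃ : Fintype.card F % 3 = 1) (hF₂ : ringChar F ≠ 2) :
    ∃ ϖ : ℤ√(-3), IsPrimary ϖ ∧ ϖ.norm = Fintype.card F ∧
      (Fintype.card F : ℤ) - Nat.card {xy : F × F // xy.2 ^ 2 = xy.1 ^ 3 + 1} = 2 * ϖ.re := by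
  classical
  obtain ⟨χ, hχ⟩ := MulChar.exists_mulChar_orderOf F (n := 3) (by omega) isPrimitiveRoot_tau
  set φ : MulChar F ℂ := (quadraticChar F).ringHomComp (Int.castRingHom ℂ)
  have hφ : φ.IsQuadratic := (quadraticChar_isQuadratic F).comp _
  have hφ₁ : φ ≠ 1 := quadraticChar_ringHomComp_ne_one hF₂
  obtain ⟨k, hk⟩ := exists_jacobiSum_add_card_eq_conductorElt hχ hφ hφ₁
  have hJ : jacobiSum χ φ = conductorElt k + (-Fintype.card F : ℤ) := by
    push_cast
    linear_combination hk
  have hnorm := normSq_jacobiSum (ne_one_of_orderOf_eq_three hχ) hφ₁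
    (mul_ne_one_of_orderOf_eq_three hχ hφ)
  rw [hJ, normSq_conductorElt_add] at hnorm
  have hcard := card_sub_card_curve_eq_neg_two_mul_re hF₂ hχ
  rw [hJ, add_re, conductorElt_re, intCast_re] at hcard
  have hodd := FiniteField.odd_card_of_char_ne_two hF₂
  refine ⟨⟨Fintype.card F + 3 * k.2, 2 * k.1 - k.2⟩, ⟨by dsimp; omega, by dsimp; omega⟩, ?_, ?_⟩
  · rw [Zsqrtd.norm_def]
    linear_combination (by exact_mod_cast hnorm :
      (-Fintype.card F - 3 * k.2 : ℤ) ^ 2 + 3 * (2 * k.1 - k.2) ^ 2 = Fintype.card F)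
  · have : (Fintype.card F : ℝ) - Nat.card {xy : F × F // xy.2 ^ 2 = xy.1 ^ 3 + 1} =
      2 * (Fintype.card F + 3 * k.2) := by
      rw [hcard]
      push_cast
      ring
    exact_mod_cast this

end CurveCounts

section CoefficientComparison

lemma pow_three_bijective_zmod {p : ℕ} [Fact p.Prime] (hp : p % 3 = 2) :
    Function.Bijective fun x : ZMod p ↦ x ^ 3 := by
  refine pow_bijective_of_coprime ?_ three_ne_zero
  rw [ZMod.card, Nat.coprime_comm, Nat.prime_three.coprime_iff_not_dvd]
  omega

lemma heckeRelationAt_heckeCoeff {p : ℕ} (hp : p.Prime) (hp6 : ¬ p ∣ 6) :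
    HeckeRelationAt heckeCoeff p
      (p - Nat.card {xy : ZMod p × ZMod p // xy.2 ^ 2 = xy.1 ^ 3 + 1}) := by
  have := Fact.mk hp
  have hp₂ : ¬ 2 ∣ p := fun h ↦ hp6 ((Nat.prime_dvd_prime_iff_eq Nat.prime_two hp).mp h ▸ by decide)
  have hp₃ : ¬ 3 ∣ p := fun h ↦
    hp6 ((Nat.prime_dvd_prime_iff_eq Nat.prime_three hp).mp h ▸ by decide)
  obtain hsplit | hinert : p % 3 = 1 ∨ p % 3 = 2 := by omega
  · have hchar : ringChar (ZMod p) ≠ 2 := by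
      rw [ZMod.ringChar_zmod_n]
      omega
    obtain ⟨ϖ, hϖ, hnorm, htrace⟩ :=
      exists_isPrimary_norm_eq_card ((ZMod.card p).symm ▸ hsplit) hchar
    rw [ZMod.card] at hnorm htrace
    exact htrace ▸ heckeRelationAt_heckeCoeff_of_split hp hnorm hϖ
  · have hcube := pow_three_bijective_zmod hinert
    rw [card_curve_of_bijective_cube hcube, Nat.card_zmod, sub_self]
    exact heckeRelationAt_heckeCoeff_of_inert hp (by omega) fun _ ↦
      zsqrtd_natCast_dvd_of_dvd_norm hp hp6 hcube.injective

end CoefficientComparison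

theorem L_value_of_E1_at_one_general
    (ω : ℝ) (hω : 0 < ω)
    (hODE : ∀ z : ℂ, ¬ inLattice ω z → deriv (wp ω) z ^ 2 = 4 * wp ω z ^ 3 - 1)
    (a : ℕ → ℤ) (ha1 : a 1 = 1)
    (hamul : ∀ m k : ℕ, Nat.Coprime m k → a (m * k) = a m * a k)
    (habad : ∀ p : ℕ, p.Prime → p ∣ 6 → ∀ j : ℕ, 1 ≤ j → a (p ^ j) = 0)
    (hagood : ∀ p : ℕ, p.Prime → ¬ p ∣ 6 →
      a p = (p : ℤ) - Nat.card {xy : ZMod p × ZMod p // xy.2 ^ 2 = xy.1 ^ 3 + 1})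
    (harec : ∀ p : ℕ, p.Prime → ¬ p ∣ 6 → ∀ j : ℕ,
      a (p ^ (j + 2)) = a p * a (p ^ (j + 1)) - (p : ℤ) * a (p ^ j))
    (L : ℂ → ℂ) (hLdiff : DifferentiableOn ℂ L {s | 1 / 2 < s.re})
    (hLser : ∀ s : ℂ, 3 / 2 < s.re → L s = ∑' m : ℕ, (a m : ℂ) / (m : ℂ) ^ s) :
    L 1 = cbrt4 / (4 * (Real.sqrt 3 : ℂ)) * (ω : ℂ) := by
  have hcoeff : Set.EqOn a heckeCoeff {0}ᶜ := by
    refine eqOn_of_heckeRelationAt (ha1.trans heckeCoeff_one.symm) fun p hp ↦ ?_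
    by_cases hp6 : p ∣ 6
    · exact Or.inl fun n hn ↦ (apply_prime_mul_eq_zero hp hamul (habad p hp hp6) hn).trans
        (heckeCoeff_mul_eq_zero_of_dvd_six hp hp6 n).symm
    · exact Or.inr ⟨a p, heckeRelationAt_of_multiplicative hp hamul (harec p hp hp6),
        hagood p hp hp6 ▸ heckeRelationAt_heckeCoeff hp hp6⟩
  refine apply_one_of_eq_tsum_heckeCoeff hω (g₃_hexPair_eq_one hω hODE) hLdiff fun s hs ↦ ?_
  have hs₀ : s ≠ 0 := fun h ↦ by norm_num [h] at hs
  rw [hLser s hs]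
  refine tsum_congr fun m ↦ ?_
  obtain rfl | hm := eq_or_ne m 0
  · rw [Nat.cast_zero, zero_cpow hs₀, div_zero, div_zero]
  · rw [hcoeff hm]

/-- **Remark 2.1 (2)** of [Qiu]. For the elliptic curve `E₁ : y² = x³ + 1` over `ℚ`,
`L(E₁/ℚ, 1) = (∛4/(4√3))·ω`, where `ω > 0` is the real period constant pinned down by
the differential equation `℘′² = 4℘³ − 1` for the lattice `L_ω = ω·ℤ[τ]`.
The Hasse–Weil L-function `L(E₁/ℚ, s)` is characterized as the entire function agreeing
for `Re s > 3/2` with the Dirichlet series `Σ aₘ·m^{−s}`, whose coefficients `aₘ` are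
multiplicative, vanish at the (additive reduction) primes `p ∣ 6` and their powers,
satisfy `a_p = p + 1 − #E₁(𝔽_p) = p − #{(x,y) ∈ 𝔽_p² | y² = x³ + 1}` at the good primes
`p ∤ 6`, and obey there the usual Euler-product recursion
`a_{p^{k+2}} = a_p·a_{p^{k+1}} − p·a_{p^k}`. -/
theorem L_value_of_E1_at_one
    (ω : ℝ) (hω : 0 < ω)
    (hODE : ∀ z : ℂ, ¬ inLattice ω z → deriv (wp ω) z ^ 2 = 4 * wp ω z ^ 3 - 1)
    (a : ℕ → ℤ) (ha1 : a 1 = 1)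
    (hamul : ∀ m k : ℕ, Nat.Coprime m k → a (m * k) = a m * a k)
    (habad : ∀ p : ℕ, p.Prime → p ∣ 6 → ∀ j : ℕ, 1 ≤ j → a (p ^ j) = 0)
    (hagood : ∀ p : ℕ, p.Prime → ¬ p ∣ 6 →
      a p = (p : ℤ) - Nat.card {xy : ZMod p × ZMod p // xy.2 ^ 2 = xy.1 ^ 3 + 1})
    (harec : ∀ p : ℕ, p.Prime → ¬ p ∣ 6 → ∀ j : ℕ,
      a (p ^ (j + 2)) = a p * a (p ^ (j + 1)) - (p : ℤ) * a (p ^ j))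
    (L : ℂ → ℂ) (hLdiff : Differentiable ℂ L)
    (hLser : ∀ s : ℂ, 3 / 2 < s.re → L s = ∑' m : ℕ, (a m : ℂ) / (m : ℂ) ^ s) :
    L 1 = cbrt4 / (4 * (Real.sqrt 3 : ℂ)) * (ω : ℂ) :=
  L_value_of_E1_at_one_general ω hω hODE a ha1 hamul habad hagood harec L hLdiff.differentiableOn
    hLser
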